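/- arXiv:1901.04922 — 9 statements merged into one kernel-verified Lean document; each statement's English description precedes it below -/
import Mathlib

section
/- For an infinite run of the p-adic Jacobi–Perron algorithm with a ℚ-linear dependence relation as above, the sequence (S_n) satisfies |S_n|_p < max_{1 ≤ i ≤ m} |S_{n-i}|_p for every n ≥ 1; consequently S_n → 0 in ℚ_p as n → ∞. -/
open Finset Filter

/-- `q` belongs to `ℤ[1/p]`. -/
def InZInvP (p : ℕ) (q : ℚ) : Prop := ∃ (z : ℤ) (k : ℕ), q = (z : ℚ) / (p : ℚ) ^ k

/-- `a` is the Browkin `s`-function value of `x`: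
`a ∈ ℤ[1/p]`, `|a|_∞ < p/2` and `|x - a|_p < 1`. -/
def IsSValue (p : ℕ) [Fact p.Prime] (x : ℚ_[p]) (a : ℚ) : Prop :=
  InZInvP p a ∧ |a| < (p : ℚ) / 2 ∧ ‖x - (a : ℚ_[p])‖ < 1

/-- An infinite run of the `p`-adic Jacobi–Perron algorithm with complete quotients
`α n i` and partial quotients `a n i` (`n ≥ 0`, `i = 1,…,m`). -/
def JPRun (p : ℕ) [Fact p.Prime] (m : ℕ) (α : ℕ → ℕ → ℚ_[p]) (a : ℕ → ℕ → ℚ) : Prop :=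
  ∀ n : ℕ,
    (∀ i ∈ Finset.Icc 1 m, IsSValue p (α n i) (a n i)) ∧
    α n m ≠ ((a n m : ℚ) : ℚ_[p]) ∧
    α (n + 1) 1 = (α n m - ((a n m : ℚ) : ℚ_[p]))⁻¹ ∧
    ∀ i ∈ Finset.Icc 2 m,
      α (n + 1) i = (α n (i - 1) - ((a n (i - 1) : ℚ) : ℚ_[p])) / (α n m - ((a n m : ℚ) : ℚ_[p]))

/-- `A : ℤ → ℕ → ℚ` is the family of convergent numerators/denominators attached to the
partial quotients `a`: `A (-j) i = δ_{ij}` for `j = 1,…,m+1`, and for `n ≥ 0`,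
`A n i = Σ_{j=1}^m a n j * A (n-j) i + A (n-m-1) i`. -/
def JPConv (m : ℕ) (a : ℕ → ℕ → ℚ) (A : ℤ → ℕ → ℚ) : Prop :=
  (∀ i ∈ Finset.Icc 1 (m + 1), ∀ j ∈ Finset.Icc 1 (m + 1),
      A (-(j : ℤ)) i = if i = j then 1 else 0) ∧
  (∀ n : ℕ, ∀ i ∈ Finset.Icc 1 (m + 1),
      A n i = (∑ j ∈ Finset.Icc 1 m, a n j * A ((n : ℤ) - j) i) + A ((n : ℤ) - m - 1) i)

/-!
The idea is to follow the linear form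
`Fₙ = α_n^{(1)} Sₙ + ⋯ + α_n^{(m)} S_{n+1-m} + S_{n-m}`, which the hypothesis annihilates at `n = 0`.
The recurrence of the `aₙ` turns `Fₙ` into `S_{n+1} + ∑ᵢ (α_n^{(i)} - a_n^{(i)}) S_{n+1-i}`, and
the recursion of the `αₙ` turns the latter into `(α_n^{(m)} - a_n^{(m)}) F_{n+1}`; hence every `Fₙ`
vanishes and `S_{n+1} = -∑ᵢ (α_n^{(i)} - a_n^{(i)}) S_{n+1-i}`. The coefficients are small, so the
ultrametric inequality makes `S_{n+1}` smaller than the largest of the preceding `m` terms, provided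
these are not all zero; and a nonzero window stays nonzero because its last coefficient is nonzero.
-/

open scoped Topology

section WindowContraction

theorem le_mul_pow_div_of_window_contraction {m : ℕ} {c C : ℝ} {u : ℕ → ℝ} (hc₀ : 0 ≤ c)
    (hc₁ : c ≤ 1) (hC : 0 ≤ C) (hinit : ∀ n < m, u n ≤ C)
    (hu : ∀ n, m ≤ n → ∃ i ∈ Icc 1 m, u n ≤ c * u (n - i)) (n : ℕ) :
    u n ≤ C * c ^ (n / m) := by
  induction n using Nat.strong_induction_on with
  | _ n ih =>
    rcases lt_or_ge n m with hn | hn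
    · simpa only [Nat.div_eq_of_lt hn, pow_zero, mul_one] using hinit n hn
    · obtain ⟨i, hi, hle⟩ := hu n hn
      obtain ⟨hi₁, him⟩ := mem_Icc.mp hi
      have hdiv : n / m ≤ (n - i) / m + 1 := by
        rw [← Nat.add_div_right _ (by omega)]
        exact Nat.div_le_div_right (by omega)
      calc
        u n ≤ c * u (n - i) := hle
        _ ≤ c * (C * c ^ ((n - i) / m)) := by gcongr; exact ih _ (by omega)
        _ = C * c ^ ((n - i) / m + 1) := by ring
        _ ≤ C * c ^ (n / m) :=
          mul_le_mul_of_nonneg_left (pow_le_pow_of_le_one hc₀ hc₁ hdiv) hC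

theorem tendsto_zero_of_window_contraction {m : ℕ} {c : ℝ} {u : ℕ → ℝ} (hc₀ : 0 ≤ c) (hc₁ : c < 1)
    (hu₀ : ∀ n, 0 ≤ u n) (hu : ∀ n, m ≤ n → ∃ i ∈ Icc 1 m, u n ≤ c * u (n - i)) :
    Tendsto u atTop (𝓝 0) := by
  have hm : m ≠ 0 := by
    rintro rfl
    simpa using hu 0 le_rfl
  have hbound : ∀ n, u n ≤ (∑ j ∈ range m, u j) * c ^ (n / m) :=
    le_mul_pow_div_of_window_contraction hc₀ hc₁.le (sum_nonneg fun j _ => hu₀ j)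
      (fun n hn => single_le_sum (fun j _ => hu₀ j) (mem_range.mpr hn)) hu
  have hlim : Tendsto (fun n => (∑ j ∈ range m, u j) * c ^ (n / m)) atTop (𝓝 0) := by
    simpa only [mul_zero, Function.comp_def] using
      ((tendsto_pow_atTop_nhds_zero_of_lt_one hc₀ hc₁).comp
        (Nat.tendsto_div_const_atTop hm)).const_mul (∑ j ∈ range m, u j)
  exact squeeze_zero hu₀ hbound hlim

end WindowContraction

section CommRing

variable {R : Type*} [CommRing R] {m : ℕ} {a : ℕ → ℕ → R} {S : ℤ → R}

/-- `S` satisfies the linear recurrence with coefficients the partial quotients `a`. The index is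
shifted by one from that of the convergents `A`, so that `S` starts from its values at
`-m, …, 0`. -/
def IsPerronSequence (m : ℕ) (a : ℕ → ℕ → R) (S : ℤ → R) : Prop :=
  ∀ n : ℕ, S (n + 1) = (∑ i ∈ Icc 1 m, a n i * S (n + 1 - i)) + S (n - m)

/-- The linear form `α_n^{(1)} Sₙ + ⋯ + α_n^{(m)} S_{n+1-m} + S_{n-m}`, whose vanishing is the
dependence relation carried to stage `n` of the algorithm. -/
def dependenceForm (m : ℕ) (α : ℕ → ℕ → R) (S : ℤ → R) (n : ℕ) : R :=
  (∑ i ∈ Icc 1 m, α n i * S (n + 1 - i)) + S (n - m)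

namespace IsPerronSequence

theorem map {R' : Type*} [CommRing R'] (hS : IsPerronSequence m a S) (f : R →+* R') :
    IsPerronSequence m (fun n i => f (a n i)) (fun n => f (S n)) := fun n => by
  simp only [hS n, map_add, map_sum, map_mul]

theorem dependenceForm_eq (hS : IsPerronSequence m a S) (α : ℕ → ℕ → R) (n : ℕ) :
    dependenceForm m α S n = S (n + 1) + ∑ i ∈ Icc 1 m, (α n i - a n i) * S (n + 1 - i) := by
  simp only [dependenceForm, hS n, sub_mul, sum_sub_distrib]
  ring

end IsPerronSequence

end CommRing

section Field

variable {K : Type*} [Field K] {m : ℕ} {α a : ℕ → ℕ → K} {S : ℤ → K}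

/-- The recursion of the complete quotients `α` of a Jacobi–Perron run with partial quotients `a`,
over an arbitrary field and with no condition on how the partial quotients are chosen. -/
structure IsJacobiPerronRun (m : ℕ) (α a : ℕ → ℕ → K) : Prop where
  sub_ne_zero : ∀ n, α n m - a n m ≠ 0
  succ_one : ∀ n, α (n + 1) 1 = (α n m - a n m)⁻¹
  succ : ∀ n, ∀ i ∈ Icc 2 m, α (n + 1) i = (α n (i - 1) - a n (i - 1)) / (α n m - a n m)

namespace IsJacobiPerronRun

theorem sub_mul_dependenceForm_succ (hrun : IsJacobiPerronRun m α a) (hm : 1 ≤ m) (S : ℤ → K)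
    (n : ℕ) :
    (α n m - a n m) * dependenceForm m α S (n + 1) =
      S (n + 1) + ∑ i ∈ Icc 1 m, (α n i - a n i) * S (n + 1 - i) := by
  obtain ⟨k, rfl⟩ : ∃ k, m = k + 1 := ⟨m - 1, by omega⟩
  have hd := hrun.sub_ne_zero n
  have hfirst : (α n (k + 1) - a n (k + 1)) * α (n + 1) 1 = 1 := by
    rw [hrun.succ_one, mul_inv_cancel₀ hd]
  have hshift : ∀ i ∈ range k, (α n (k + 1) - a n (k + 1)) *
      (α (n + 1) (1 + (i + 1)) * S ((n + 1 : ℕ) + 1 - (1 + (i + 1) : ℕ))) =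
        (α n (1 + i) - a n (1 + i)) * S (n + 1 - (1 + i : ℕ)) := by
    intro i hi
    have hmem : 1 + (i + 1) ∈ Icc 2 (k + 1) := by
      simp only [mem_range, mem_Icc] at hi ⊢
      omega
    rw [hrun.succ n _ hmem, ← mul_assoc, mul_div_cancel₀ _ hd, ← add_assoc 1 i 1,
      Nat.add_sub_cancel]
    push_cast
    ring_nf
  simp only [dependenceForm, ← Ico_add_one_right_eq_Icc, sum_Ico_eq_sum_range, Nat.add_sub_cancel]
  rw [sum_range_succ', sum_range_succ, mul_add, mul_add, mul_sum, sum_congr rfl hshift,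
    ← mul_assoc, add_zero, hfirst]
  push_cast
  ring_nf

theorem dependenceForm_eq_zero (hrun : IsJacobiPerronRun m α a) (hm : 1 ≤ m)
    (hS : IsPerronSequence m a S) (h₀ : dependenceForm m α S 0 = 0) (n : ℕ) :
    dependenceForm m α S n = 0 := by
  induction n with
  | zero => exact h₀
  | succ n ih =>
    have hmul : (α n m - a n m) * dependenceForm m α S (n + 1) = 0 := by
      rw [hrun.sub_mul_dependenceForm_succ hm, ← hS.dependenceForm_eq, ih]
    exact (mul_eq_zero.mp hmul).resolve_left (hrun.sub_ne_zero n)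

theorem eq_neg_sum (hrun : IsJacobiPerronRun m α a) (hm : 1 ≤ m)
    (hS : IsPerronSequence m a S) (h₀ : dependenceForm m α S 0 = 0) (n : ℕ) :
    S (n + 1) = -∑ i ∈ Icc 1 m, (α n i - a n i) * S (n + 1 - i) :=
  eq_neg_of_add_eq_zero_left <|
    (hS.dependenceForm_eq α n).symm.trans (hrun.dependenceForm_eq_zero hm hS h₀ n)

theorem exists_window_ne_zero (hrun : IsJacobiPerronRun m α a) (hm : 1 ≤ m)
    (hS : IsPerronSequence m a S) (h₀ : dependenceForm m α S 0 = 0)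
    (hne : ∃ j ∈ Icc 1 (m + 1), S (1 - j) ≠ 0) (n : ℕ) :
    ∃ i ∈ Icc 1 m, S (n + 1 - i) ≠ 0 := by
  induction n with
  | zero =>
    by_contra! hzero
    have hlast : S (-m) = 0 := by
      have hsum : ∑ i ∈ Icc 1 m, α 0 i * S (1 - i) = 0 :=
        sum_eq_zero fun i hi => mul_eq_zero_of_right _ (by simpa using hzero i hi)
      simpa [dependenceForm, hsum] using h₀
    obtain ⟨j, hj, hSj⟩ := hne
    rw [← insert_Icc_right_eq_Icc_add_one (by omega), mem_insert] at hj
    rcases hj with rfl | hj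
    · exact hSj (by simpa using hlast)
    · exact hSj (by simpa using hzero j hj)
  | succ n ih =>
    by_contra! hzero
    have hprev : ∀ i < m, S (n + 1 - i) = 0 := fun i hi => by
      simpa using hzero (i + 1) (mem_Icc.mpr ⟨by omega, by omega⟩)
    have hlast : (α n m - a n m) * S (n + 1 - m) = 0 := by
      have hsum := hrun.eq_neg_sum hm hS h₀ n
      rw [sum_eq_single_of_mem m (right_mem_Icc.mpr hm) fun i hi him => by
        rw [hprev i ((mem_Icc.mp hi).2.lt_of_ne him), mul_zero]] at hsum
      rw [← neg_eq_zero, ← hsum]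
      simpa using hprev 0 hm
    obtain ⟨i, hi, hSi⟩ := ih
    rcases (mem_Icc.mp hi).2.lt_or_eq with him | rfl
    · exact hSi (hprev i him)
    · exact hSi ((mul_eq_zero.mp hlast).resolve_left (hrun.sub_ne_zero n))

end IsJacobiPerronRun

end Field

section Ultrametric

variable {K : Type*} [NormedField K] [IsUltrametricDist K] {m : ℕ} {α a : ℕ → ℕ → K} {S : ℤ → K}

namespace IsJacobiPerronRun

theorem exists_norm_le_norm_sub_mul (hrun : IsJacobiPerronRun m α a) (hm : 1 ≤ m)
    (hS : IsPerronSequence m a S) (h₀ : dependenceForm m α S 0 = 0) (n : ℕ) :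
    ∃ i ∈ Icc 1 m, ‖S (n + 1)‖ ≤ ‖α n i - a n i‖ * ‖S (n + 1 - i)‖ := by
  obtain ⟨i, hi, hle⟩ := IsUltrametricDist.exists_norm_finsetSum_le_of_nonempty
    (nonempty_Icc.mpr hm) fun i : ℕ => (α n i - a n i) * S (n + 1 - i)
  refine ⟨i, hi, ?_⟩
  rwa [hrun.eq_neg_sum hm hS h₀ n, norm_neg, ← norm_mul]

theorem exists_norm_lt (hrun : IsJacobiPerronRun m α a) (hm : 1 ≤ m)
    (hα : ∀ n, ∀ i ∈ Icc 1 m, ‖α n i - a n i‖ < 1) (hS : IsPerronSequence m a S)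
    (h₀ : dependenceForm m α S 0 = 0) (hne : ∃ j ∈ Icc 1 (m + 1), S (1 - j) ≠ 0) (n : ℕ) :
    ∃ i ∈ Icc 1 m, ‖S (n + 1)‖ < ‖S (n + 1 - i)‖ := by
  obtain ⟨i, hi, hle⟩ := hrun.exists_norm_le_norm_sub_mul hm hS h₀ n
  by_cases hi₀ : S (n + 1 - i) = 0
  · obtain ⟨j, hj, hSj⟩ := hrun.exists_window_ne_zero hm hS h₀ hne n
    rw [hi₀, norm_zero, mul_zero] at hle
    exact ⟨j, hj, hle.trans_lt (norm_pos_iff.mpr hSj)⟩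
  · exact ⟨i, hi, hle.trans_lt (mul_lt_of_lt_one_left (norm_pos_iff.mpr hi₀) (hα n i hi))⟩

theorem tendsto_zero (hrun : IsJacobiPerronRun m α a) (hm : 1 ≤ m) {c : ℝ} (hc : c < 1)
    (hα : ∀ n, ∀ i ∈ Icc 1 m, ‖α n i - a n i‖ ≤ c) (hS : IsPerronSequence m a S)
    (h₀ : dependenceForm m α S 0 = 0) : Tendsto (fun n : ℕ => S n) atTop (𝓝 0) := by
  have hc₀ : 0 ≤ c := (norm_nonneg _).trans (hα 0 1 (left_mem_Icc.mpr hm))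
  -- Reindexing by `k = n + m` puts the first window `S (1 - m), …, S 0` at `k < m`.
  have hlim : Tendsto (fun k : ℕ => ‖S (k - m + 1)‖) atTop (𝓝 0) := by
    refine tendsto_zero_of_window_contraction (m := m) hc₀ hc (fun _ => norm_nonneg _)
      fun k hk => ?_
    obtain ⟨n, rfl⟩ := Nat.exists_eq_add_of_le' hk
    obtain ⟨i, hi, hle⟩ := hrun.exists_norm_le_norm_sub_mul hm hS h₀ n
    have hidx : ((n + m - i : ℕ) : ℤ) - m + 1 = n + 1 - i := by
      have := (mem_Icc.mp hi).2
      omega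
    refine ⟨i, hi, ?_⟩
    rw [hidx, Nat.cast_add, add_sub_cancel_right]
    exact hle.trans (mul_le_mul_of_nonneg_right (hα n i hi) (norm_nonneg _))
  rw [← tendsto_add_atTop_iff_nat 1, tendsto_zero_iff_norm_tendsto_zero]
  simpa using (tendsto_add_atTop_iff_nat m).mpr hlim

end IsJacobiPerronRun

/-- Every solution of the recurrence is a combination `∑ᵢ xᵢ A^{(i)}` of the convergents, with
`xⱼ = S (1 - j)`; so `h₀` is the dependence relation and `hne` says that it is nontrivial. -/
theorem jacobiPerron_S_padic_decrease_general (hm : 1 ≤ m) {c : ℝ} (hc : c < 1)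
    (hrun : IsJacobiPerronRun m α a) (hα : ∀ n, ∀ i ∈ Icc 1 m, ‖α n i - a n i‖ ≤ c)
    (hS : IsPerronSequence m a S) (h₀ : dependenceForm m α S 0 = 0)
    (hne : ∃ j ∈ Icc 1 (m + 1), S (1 - j) ≠ 0) :
    (∀ n : ℤ, 1 ≤ n →
      ‖S n‖ < (Icc 1 m).sup' (nonempty_Icc.mpr hm) fun i => ‖S (n - i)‖) ∧
    Tendsto (fun n : ℕ => S n) atTop (𝓝 0) := by
  refine ⟨fun n hn => ?_, hrun.tendsto_zero hm hc hα hS h₀⟩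
  obtain ⟨k, rfl⟩ : ∃ k : ℕ, n = k + 1 := ⟨(n - 1).toNat, by omega⟩
  exact (lt_sup'_iff _).mpr <|
    hrun.exists_norm_lt hm (fun n i hi => (hα n i hi).trans_lt hc) hS h₀ hne k

end Ultrametric

theorem padic_norm_le_inv_of_norm_lt_one {p : ℕ} [Fact p.Prime] {z : ℚ_[p]} (hz : ‖z‖ < 1) :
    ‖z‖ ≤ (p : ℝ)⁻¹ := by
  simpa using (Padic.norm_le_pow_iff_norm_lt_pow_add_one z (-1)).mpr (by simpa using hz)

namespace JPRun

variable {p m : ℕ} [Fact p.Prime] {α : ℕ → ℕ → ℚ_[p]} {a : ℕ → ℕ → ℚ}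

theorem isJacobiPerronRun (hrun : JPRun p m α a) :
    IsJacobiPerronRun m α fun n i => (a n i : ℚ_[p]) where
  sub_ne_zero n := sub_ne_zero.mpr (hrun n).2.1
  succ_one n := (hrun n).2.2.1
  succ n := (hrun n).2.2.2

theorem norm_sub_le_inv (hrun : JPRun p m α a) (n i : ℕ) (hi : i ∈ Icc 1 m) :
    ‖α n i - a n i‖ ≤ (p : ℝ)⁻¹ :=
  padic_norm_le_inv_of_norm_lt_one ((hrun n).1 i hi).2.2

end JPRun

/-- The sequence `Sₙ = ∑ᵢ xᵢ A_{n-1}^{(i)}` of values on the convergents of the linear form with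
coefficients `x`. -/
def convergentForm (m : ℕ) (x : ℕ → ℚ) (A : ℤ → ℕ → ℚ) (n : ℤ) : ℚ :=
  ∑ i ∈ Icc 1 (m + 1), x i * A (n - 1) i

namespace JPConv

variable {m : ℕ} {a : ℕ → ℕ → ℚ} {A : ℤ → ℕ → ℚ}

theorem isPerronSequence (hA : JPConv m a A) (x : ℕ → ℚ) :
    IsPerronSequence m a (convergentForm m x A) := by
  intro n
  have hrec : ∀ i ∈ Icc 1 (m + 1), x i * A (n + 1 - 1) i =
      (∑ j ∈ Icc 1 m, a n j * (x i * A (n + 1 - j - 1) i)) + x i * A (n - m - 1) i := by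
    intro i hi
    rw [add_sub_cancel_right, hA.2 n i hi, mul_add, mul_sum]
    congr 1
    refine sum_congr rfl fun j _ => ?_
    rw [sub_right_comm, add_sub_cancel_right]
    ring
  simp only [convergentForm, mul_sum]
  rw [sum_congr rfl hrec, sum_add_distrib, sum_comm]

theorem convergentForm_one_sub (hA : JPConv m a A) (x : ℕ → ℚ) {j : ℕ} (hj : j ∈ Icc 1 (m + 1)) :
    convergentForm m x A (1 - j) = x j := by
  have hδ : ∀ i ∈ Icc 1 (m + 1), x i * A (1 - j - 1) i = if i = j then x i else 0 := by
    intro i hi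
    rw [sub_right_comm, sub_self, zero_sub, hA.1 i hi j hj, mul_ite, mul_one, mul_zero]
  rw [convergentForm, sum_congr rfl hδ, sum_ite_eq', if_pos hj]

theorem dependenceForm_zero {K : Type*} [Field K] (hA : JPConv m a A) (x : ℕ → ℚ)
    (α : ℕ → ℕ → K) :
    dependenceForm m α (fun n => (convergentForm m x A n : K)) 0 =
      (∑ i ∈ Icc 1 m, (x i : K) * α 0 i) + x (m + 1) := by
  have hlast : convergentForm m x A ((0 : ℕ) - m) = x (m + 1) := by
    simpa using hA.convergentForm_one_sub x (right_mem_Icc.mpr (by omega : 1 ≤ m + 1))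
  rw [dependenceForm, hlast]
  congr 1
  refine sum_congr rfl fun i hi => ?_
  rw [Nat.cast_zero, zero_add,
    hA.convergentForm_one_sub x (Icc_subset_Icc_right m.le_succ hi), mul_comm]

theorem exists_convergentForm_ne_zero (hA : JPConv m a A) {x : ℕ → ℤ}
    (hx : (Icc 1 (m + 1)).gcd x ≠ 0) :
    ∃ j ∈ Icc 1 (m + 1), convergentForm m (fun i => x i) A (1 - j) ≠ 0 := by
  by_contra! hzero
  have hx₀ : ∀ j ∈ Icc 1 (m + 1), x j = 0 := fun j hj =>
    Int.cast_eq_zero.mp ((hA.convergentForm_one_sub _ hj).symm.trans (hzero j hj))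
  exact hx (gcd_eq_zero_iff.mpr hx₀)

end JPConv

/-- For an infinite run with a `ℚ`-linear dependence relation with coprime
integer coefficients, `|Sₙ|_p < max_{1 ≤ i ≤ m} |S_{n-i}|_p` for every `n ≥ 1`, and
consequently `Sₙ → 0` in `ℚ_p`. -/
theorem jacobiPerron_S_padic_decrease (p m : ℕ) [hp : Fact p.Prime]
    (hp2 : 2 < p) (hm : 1 ≤ m)
    (α : ℕ → ℕ → ℚ_[p]) (a : ℕ → ℕ → ℚ) (A : ℤ → ℕ → ℚ)
    (hrun : JPRun p m α a) (hconv : JPConv m a A)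
    (x : ℕ → ℤ) (hgcd : Finset.gcd (Finset.Icc 1 (m + 1)) x = 1)
    (hdep : (∑ i ∈ Finset.Icc 1 m, ((x i : ℚ) : ℚ_[p]) * α 0 i) + ((x (m + 1) : ℤ) : ℚ_[p]) = 0)
    (S : ℤ → ℚ)
    (hS : ∀ n : ℤ, S n = ∑ i ∈ Finset.Icc 1 (m + 1), (x i : ℚ) * A (n - 1) i) :
    (∀ n : ℤ, 1 ≤ n →
      padicNorm p (S n) <
        (Finset.Icc 1 m).sup' (Finset.nonempty_Icc.mpr hm)
          (fun i => padicNorm p (S (n - (i : ℤ))))) ∧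
    Filter.Tendsto (fun n : ℕ => ((S n : ℚ) : ℚ_[p])) Filter.atTop (nhds 0) := by
  obtain rfl : S = convergentForm m (fun i => x i) A := funext hS
  obtain ⟨hlt, hlim⟩ := jacobiPerron_S_padic_decrease_general hm
    (inv_lt_one_of_one_lt₀ (Nat.one_lt_cast.mpr hp.out.one_lt)) hrun.isJacobiPerronRun
    hrun.norm_sub_le_inv ((hconv.isPerronSequence fun i => x i).map (Rat.castHom ℚ_[p]))
    ((hconv.dependenceForm_zero _ α).trans (by exact_mod_cast hdep))
    (by simpa using hconv.exists_convergentForm_ne_zero (hgcd ▸ one_ne_zero))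
  refine ⟨fun n hn => ?_, hlim⟩
  simpa [lt_sup'_iff, Padic.eq_padicNorm] using hlt n hn
end

section
/- For an infinite run of the p-adic Jacobi–Perron algorithm with a ℚ-linear dependence relation as above, for every n ≥ 1 the integer S_n is divisible by p^{⌈n/m⌉}; in particular, writing n = qm + r with 1 ≤ r ≤ m, one has v_p(S_n) > q, and v_p(S_n) > ⌊n/m⌋ whenever m does not divide n. -/
open Finset Filter

/-! The relation `∑ x_i α_0^{(i)} + x_{m+1} = 0` propagates along the algorithm to
`∑ α_n^{(j)} S_{n+1-j} + S_{n-m} = 0`. Subtracting it from the recurrence of the convergents gives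
`S_{n+1} = ∑ (a_n^{(j)} - α_n^{(j)}) S_{n+1-j}`, whose coefficients all have `p`-adic absolute value
at most `1/p`. Hence each `S_n` gains a factor `p` over the worst of its `m` predecessors, and
`v_p(S_n)` increases by at least one every `m` steps. Since `S_n` also lies in `ℤ[1/p]`, it is an
integer. -/

/-- The value `∑ j, y j * S (n + 1 - j) + S (n - m)` at the window of `S` ending at `n` of
the linear form with coefficients `(y 1, …, y m, 1)`: for `y = a n` it is the right-hand side of the
recurrence of the convergents, and for `y = α n` it is the dependence relation between complete
quotients. -/
def windowForm {R : Type*} [Semiring R] (m : ℕ) (y : ℕ → R) (S : ℤ → R) (n : ℤ) : R :=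
  ∑ j ∈ Icc 1 m, y j * S (n + 1 - j) + S (n - m)

/-- The recurrence of the convergents, shifted by one so as to be satisfied by `S n`, which is built
from the convergents of index `n - 1`. -/
def IsJacobiPerronRecurrence {R : Type*} [Semiring R] (m : ℕ) (a : ℕ → ℕ → R) (S : ℤ → R) : Prop :=
  ∀ n : ℕ, S (n + 1) = windowForm m (a n) S n

/-- The Jacobi–Perron transformation rule over a field, for partial quotients chosen arbitrarily. -/
structure IsJacobiPerronExpansion {K : Type*} [Field K] (m : ℕ) (α a : ℕ → ℕ → K) : Prop where
  ne : ∀ n, α n m ≠ a n m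
  succ_one : ∀ n, α (n + 1) 1 = (α n m - a n m)⁻¹
  succ_of_two_le : ∀ n, ∀ i ∈ Icc 2 m,
    α (n + 1) i = (α n (i - 1) - a n (i - 1)) / (α n m - a n m)

/-- The sequence `S n = ∑ i, x i * A (n - 1) i` that a dependence relation with coefficients `x`
attaches to the convergents `A`. -/
def relationSeq (m : ℕ) (A : ℤ → ℕ → ℚ) (x : ℕ → ℤ) (n : ℤ) : ℚ :=
  ∑ i ∈ Icc 1 (m + 1), (x i : ℚ) * A (n - 1) i

/-- The subring `ℤ[1/p]` of `ℚ`. -/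
def zInvSubring (p : ℕ) [NeZero p] : Subring ℚ where
  carrier := {q | InZInvP p q}
  mul_mem' := by
    rintro _ _ ⟨z, k, rfl⟩ ⟨w, l, rfl⟩
    exact ⟨z * w, k + l, by rw [div_mul_div_comm, pow_add, Int.cast_mul]⟩
  one_mem' := ⟨1, 0, by simp⟩
  add_mem' := by
    rintro _ _ ⟨z, k, rfl⟩ ⟨w, l, rfl⟩
    have hp : (p : ℚ) ≠ 0 := NeZero.ne _
    refine ⟨z * p ^ l + p ^ k * w, k + l, ?_⟩
    rw [div_add_div _ _ (pow_ne_zero k hp) (pow_ne_zero l hp), pow_add]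
    push_cast
    rfl
  zero_mem' := ⟨0, 0, by simp⟩
  neg_mem' := by
    rintro _ ⟨z, k, rfl⟩
    exact ⟨-z, k, by rw [Int.cast_neg, neg_div]⟩

section Recurrence

variable {R : Type*} {m : ℕ}

theorem windowForm_sub_windowForm [Ring R] (y z : ℕ → R) (S : ℤ → R) (n : ℤ) :
    windowForm m y S n - windowForm m z S n =
      ∑ j ∈ Icc 1 m, (y j - z j) * S (n + 1 - j) := by
  simp only [windowForm, add_sub_add_right_eq_sub, sub_mul, sum_sub_distrib]

theorem IsJacobiPerronRecurrence.map {R' : Type*} [Semiring R] [Semiring R'] {a : ℕ → ℕ → R}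
    {S : ℤ → R} (h : IsJacobiPerronRecurrence m a S) (f : R →+* R') :
    IsJacobiPerronRecurrence m (fun n j ↦ f (a n j)) (fun n ↦ f (S n)) := fun n ↦ by
  simp only [h n, windowForm, map_add, map_sum, map_mul]

theorem IsJacobiPerronRecurrence.mem_subring [Ring R] {a : ℕ → ℕ → R} {S : ℤ → R}
    (h : IsJacobiPerronRecurrence m a S) (B : Subring R)
    (ha : ∀ n, ∀ j ∈ Icc 1 m, a n j ∈ B) (hinit : ∀ j ∈ Icc 1 (m + 1), S (1 - j) ∈ B)
    (n : ℕ) : S n ∈ B := by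
  suffices hshift : ∀ i : ℕ, S ((i : ℤ) - m) ∈ B by simpa using hshift (n + m)
  intro i
  induction i using Nat.strong_induction_on with
  | _ i ih =>
    rcases le_or_gt i m with him | him
    · convert hinit (m + 1 - i) (by simp only [mem_Icc]; omega) using 2
      omega
    · obtain ⟨l, rfl⟩ := Nat.exists_eq_add_of_lt him
      have hnew : S (((m + l + 1 : ℕ) : ℤ) - m) = windowForm m (a l) S l := by
        rw [← h l]
        congr 1
        omega
      rw [hnew]
      refine B.add_mem (B.sum_mem fun j hj ↦ B.mul_mem (ha l j hj) ?_) ?_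
      · have hj' := mem_Icc.mp hj
        convert ih (m + l + 1 - j) (by omega) using 2
        omega
      · exact ih l (by omega)

end Recurrence

section Expansion

variable {K : Type*} [Field K] {m : ℕ} {α a : ℕ → ℕ → K}

theorem sum_Icc_one_succ {M : Type*} [AddCommMonoid M] (f : ℕ → M) (k : ℕ) :
    ∑ j ∈ Icc 1 (k + 1), f j = f 1 + ∑ j ∈ Icc 1 k, f (j + 1) := by
  simp only [← Ico_add_one_right_eq_Icc]
  rw [sum_eq_sum_Ico_succ_bot (by omega), sum_Ico_add']

theorem IsJacobiPerronExpansion.mul_windowForm_succ (h : IsJacobiPerronExpansion m α a)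
    (hm : 1 ≤ m) (S : ℤ → K) (n : ℕ) :
    (α n m - a n m) * windowForm m (α (n + 1)) S (n + 1) =
      S (n + 1) + ∑ j ∈ Icc 1 m, (α n j - a n j) * S (n + 1 - j) := by
  obtain ⟨k, rfl⟩ := Nat.exists_eq_add_of_le' hm
  have hδ : α n (k + 1) - a n (k + 1) ≠ 0 := sub_ne_zero.mpr (h.ne n)
  have hhead : (α n (k + 1) - a n (k + 1)) * α (n + 1) 1 = 1 := by
    rw [h.succ_one, mul_inv_cancel₀ hδ]
  have htail : ∀ j ∈ Icc 1 k,
      (α n (k + 1) - a n (k + 1)) * (α (n + 1) (j + 1) * S (n + 1 + 1 - (j + 1 : ℕ))) =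
        (α n j - a n j) * S (n + 1 - j) := by
    intro j hj
    have hj' : j + 1 ∈ Icc 2 (k + 1) := by simp only [mem_Icc] at hj ⊢; omega
    rw [h.succ_of_two_le n _ hj', ← mul_assoc, mul_div_cancel₀ _ hδ, Nat.add_sub_cancel,
      Nat.cast_succ, add_sub_add_right_eq_sub]
  rw [windowForm, sum_Icc_one_succ, sum_Icc_succ_top (by omega), mul_add, mul_add, mul_sum,
    sum_congr rfl htail, ← mul_assoc, hhead, Nat.cast_one, add_sub_cancel_right, Nat.cast_succ,
    add_sub_add_right_eq_sub]
  ring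

variable {S : ℤ → K}

theorem IsJacobiPerronExpansion.windowForm_eq_zero (h : IsJacobiPerronExpansion m α a)
    (hm : 1 ≤ m) (hS : IsJacobiPerronRecurrence m a S) (h0 : windowForm m (α 0) S 0 = 0) (n : ℕ) :
    windowForm m (α n) S n = 0 := by
  induction n with
  | zero => exact h0
  | succ n ih =>
    have hδ : α n m - a n m ≠ 0 := sub_ne_zero.mpr (h.ne n)
    refine (mul_eq_zero_iff_left hδ).mp ?_
    rw [Nat.cast_succ, h.mul_windowForm_succ hm, ← windowForm_sub_windowForm, ih, hS n]
    ring

theorem IsJacobiPerronExpansion.eq_sum_sub_mul (h : IsJacobiPerronExpansion m α a)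
    (hm : 1 ≤ m) (hS : IsJacobiPerronRecurrence m a S) (h0 : windowForm m (α 0) S 0 = 0) (n : ℕ) :
    S (n + 1) = ∑ j ∈ Icc 1 m, (a n j - α n j) * S (n + 1 - j) := by
  rw [← windowForm_sub_windowForm, h.windowForm_eq_zero hm hS h0, sub_zero, hS n]

end Expansion

section Convergents

variable {m : ℕ} {a : ℕ → ℕ → ℚ} {A : ℤ → ℕ → ℚ}

theorem JPConv.relationSeq_one_sub (hA : JPConv m a A) (x : ℕ → ℤ) {j : ℕ}
    (hj : j ∈ Icc 1 (m + 1)) : relationSeq m A x (1 - j) = x j := by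
  have hinit : ∀ i ∈ Icc 1 (m + 1),
      (x i : ℚ) * A (1 - j - 1) i = if i = j then (x i : ℚ) else 0 := fun i hi ↦ by
    rw [sub_sub_cancel_left, hA.1 i hi j hj, mul_ite, mul_one, mul_zero]
  rw [relationSeq, sum_congr rfl hinit, sum_ite_eq_of_mem' _ _ _ hj]

theorem JPConv.isJacobiPerronRecurrence_relationSeq (hA : JPConv m a A) (x : ℕ → ℤ) :
    IsJacobiPerronRecurrence m a (relationSeq m A x) := by
  intro n
  have hrec : ∀ i ∈ Icc 1 (m + 1), (x i : ℚ) * A (n + 1 - 1) i =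
      ∑ j ∈ Icc 1 m, a n j * (x i * A (n + 1 - j - 1) i) + x i * A (n - m - 1) i := by
    intro i hi
    rw [add_sub_cancel_right, hA.2 n i hi, mul_add, mul_sum]
    simp only [add_sub_right_comm (n : ℤ) 1, add_sub_cancel_right, mul_left_comm]
  simp only [relationSeq, windowForm]
  rw [sum_congr rfl hrec, sum_add_distrib, sum_comm]
  simp only [mul_sum]

theorem JPConv.windowForm_relationSeq_zero {K : Type*} [Field K]
    (hA : JPConv m a A) (x : ℕ → ℤ) (y : ℕ → K) :
    windowForm m y (fun n ↦ (relationSeq m A x n : K)) 0 =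
      ∑ i ∈ Icc 1 m, (x i : K) * y i + x (m + 1) := by
  have hlast : relationSeq m A x (0 - m) = x (m + 1) := by
    rw [← hA.relationSeq_one_sub x (right_mem_Icc.mpr (by omega))]
    congr 1
    omega
  rw [windowForm, hlast, Rat.cast_intCast]
  congr 1
  refine sum_congr rfl fun j hj ↦ ?_
  rw [zero_add, hA.relationSeq_one_sub x (Icc_subset_Icc_right (by omega) hj), Rat.cast_intCast,
    mul_comm]

end Convergents

theorem le_of_window_contraction {β : Type*} [Preorder β] {b : ℕ → β} (hb : b 1 ≤ b 0) {m : ℕ}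
    {f : ℕ → β} (hinit : ∀ i < m, f i ≤ b 0)
    (hstep : ∀ n k, (∀ i < m, f (n + i) ≤ b k) → f (n + m) ≤ b (k + 1)) {n k : ℕ}
    (h : k * m ≤ n) : f n ≤ b k := by
  induction n using Nat.strong_induction_on generalizing k with
  | _ n ih =>
    rcases lt_or_ge n m with hn | hn
    · obtain rfl : k = 0 := by
        by_contra hk
        exact absurd (Nat.le_mul_of_pos_left m (Nat.pos_of_ne_zero hk)) (by omega)
      exact hinit n hn
    · obtain ⟨l, rfl⟩ := Nat.exists_eq_add_of_le' hn
      cases k with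
      | zero => exact (hstep l 0 fun i hi ↦ ih _ (by omega) (by omega)).trans hb
      | succ k =>
        rw [Nat.succ_mul] at h
        exact hstep l k fun i hi ↦ ih _ (by omega) (by omega)

section Padic

variable {p : ℕ} [hp : Fact p.Prime]

theorem norm_sum_mul_le_zpow {ι : Type*} {s : Finset ι} {u v : ι → ℚ_[p]} {k : ℕ}
    (hu : ∀ j ∈ s, ‖u j‖ < 1) (hv : ∀ j ∈ s, ‖v j‖ ≤ (p : ℝ) ^ (-k : ℤ)) :
    ‖∑ j ∈ s, u j * v j‖ ≤ (p : ℝ) ^ (-(k + 1 : ℕ) : ℤ) := by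
  have hp0 : (p : ℝ) ≠ 0 := mod_cast hp.out.ne_zero
  refine IsUltrametricDist.norm_sum_le_of_forall_le_of_nonneg (by positivity) fun j hj ↦ ?_
  have hu' : ‖u j‖ ≤ (p : ℝ) ^ (-1 : ℤ) :=
    (Padic.norm_le_pow_iff_norm_lt_pow_add_one _ _).mpr (by simpa using hu j hj)
  calc ‖u j * v j‖ = ‖u j‖ * ‖v j‖ := norm_mul _ _
    _ ≤ (p : ℝ) ^ (-1 : ℤ) * (p : ℝ) ^ (-k : ℤ) := by gcongr; exact hv j hj
    _ = (p : ℝ) ^ (-(k + 1 : ℕ) : ℤ) := by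
      rw [← zpow_add₀ hp0, Nat.cast_succ, neg_add_rev]

theorem norm_le_zpow_of_eq_sum_mul {m : ℕ} {u : ℕ → ℕ → ℚ_[p]} {S : ℤ → ℚ_[p]}
    (hu : ∀ n, ∀ j ∈ Icc 1 m, ‖u n j‖ < 1) (hinit : ∀ j ∈ Icc 1 m, ‖S (1 - j)‖ ≤ 1)
    (hS : ∀ n : ℕ, S (n + 1) = ∑ j ∈ Icc 1 m, u n j * S (n + 1 - j)) {n k : ℕ}
    (h : k * m < n + m) : ‖S n‖ ≤ (p : ℝ) ^ (-k : ℤ) := by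
  obtain ⟨i, hi⟩ : ∃ i : ℕ, (n : ℤ) = i + 1 - m := ⟨n + m - 1, by omega⟩
  rw [hi]
  refine le_of_window_contraction (m := m) (b := fun k : ℕ ↦ (p : ℝ) ^ (-k : ℤ))
    (f := fun i : ℕ ↦ ‖S (i + 1 - m)‖) ?_ (fun i hi ↦ ?_) (fun l k hl ↦ ?_) (by omega)
  · exact zpow_le_zpow_right₀ (mod_cast hp.out.one_le) (by simp)
  · have hidx : (i : ℤ) + 1 - m = 1 - (m - i : ℕ) := by omega
    simpa [hidx] using hinit (m - i) (by simp only [mem_Icc]; omega)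
  · have hsum : ‖S (l + 1)‖ ≤ (p : ℝ) ^ (-(k + 1 : ℕ) : ℤ) := by
      rw [hS l]
      refine norm_sum_mul_le_zpow (hu l) fun j hj ↦ ?_
      have hj' := mem_Icc.mp hj
      have hidx : (l : ℤ) + 1 - j = (l + (m - j) : ℕ) + 1 - m := by omega
      rw [hidx]
      exact hl (m - j) (by omega)
    have hidx : (l : ℤ) + 1 = (l + m : ℕ) + 1 - m := by omega
    rwa [hidx] at hsum

theorem InZInvP.exists_int_eq_and_pow_dvd {q : ℚ} (hq : InZInvP p q) {k : ℕ}
    (h : ‖(q : ℚ_[p])‖ ≤ (p : ℝ) ^ (-k : ℤ)) : ∃ z : ℤ, q = z ∧ (p : ℤ) ^ k ∣ z := by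
  obtain ⟨z, l, rfl⟩ := hq
  have hpR : (0 : ℝ) < p := mod_cast hp.out.pos
  have hpQ : (p : ℚ) ≠ 0 := mod_cast hp.out.ne_zero
  have hz : ‖(z : ℚ_[p])‖ ≤ (p : ℝ) ^ (-(k + l : ℕ) : ℤ) := by
    push_cast at h
    rw [norm_div, Padic.norm_p_pow, div_le_iff₀ (by positivity), ← zpow_add₀ hpR.ne'] at h
    rwa [Nat.cast_add, neg_add]
  obtain ⟨w, rfl⟩ := (Padic.norm_int_le_pow_iff_dvd z (k + l)).mp hz
  refine ⟨p ^ k * w, ?_, dvd_mul_right _ _⟩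
  push_cast
  rw [pow_add, mul_right_comm, mul_div_cancel_right₀ _ (pow_ne_zero l hpQ)]

theorem eq_zero_or_lt_padicValRat {q : ℚ} {k : ℕ} (h : ∃ z : ℤ, q = z ∧ (p : ℤ) ^ (k + 1) ∣ z) :
    q = 0 ∨ (k : ℤ) < padicValRat p q := by
  obtain ⟨z, rfl, hz⟩ := h
  rw [Int.cast_eq_zero, padicValRat.of_int, Nat.cast_lt, ← Nat.succ_le_iff]
  exact (padicValInt_dvd_iff (k + 1) z).mp hz

variable {m : ℕ} {α : ℕ → ℕ → ℚ_[p]} {a : ℕ → ℕ → ℚ} {A : ℤ → ℕ → ℚ} {x : ℕ → ℤ}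

theorem JPRun.isJacobiPerronExpansion (h : JPRun p m α a) :
    IsJacobiPerronExpansion m α (fun n i ↦ (a n i : ℚ_[p])) :=
  ⟨fun n ↦ (h n).2.1, fun n ↦ (h n).2.2.1, fun n ↦ (h n).2.2.2⟩

theorem JPConv.inZInvP_relationSeq (hA : JPConv m a A)
    (ha : ∀ n, ∀ i ∈ Icc 1 m, InZInvP p (a n i)) (n : ℕ) : InZInvP p (relationSeq m A x n) := by
  refine (hA.isJacobiPerronRecurrence_relationSeq x).mem_subring (zInvSubring p) ha
    (fun j hj ↦ ?_) n
  rw [hA.relationSeq_one_sub x hj]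
  exact intCast_mem _ _

theorem JPConv.norm_relationSeq_le_zpow (hA : JPConv m a A) (hm : 1 ≤ m)
    (hα : IsJacobiPerronExpansion m α (fun n i ↦ (a n i : ℚ_[p])))
    (hαa : ∀ n, ∀ i ∈ Icc 1 m, ‖α n i - a n i‖ < 1)
    (hdep : ∑ i ∈ Icc 1 m, (x i : ℚ_[p]) * α 0 i + x (m + 1) = 0) {n k : ℕ}
    (h : k * m < n + m) : ‖(relationSeq m A x n : ℚ_[p])‖ ≤ (p : ℝ) ^ (-k : ℤ) := by
  have hrec := (hA.isJacobiPerronRecurrence_relationSeq x).map (Rat.castHom ℚ_[p])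
  have h0 := (hA.windowForm_relationSeq_zero x (α 0)).trans hdep
  refine norm_le_zpow_of_eq_sum_mul (S := fun n ↦ (relationSeq m A x n : ℚ_[p]))
    (fun n j hj ↦ ?_) (fun j hj ↦ ?_) (hα.eq_sum_sub_mul hm hrec h0) h
  · exact norm_sub_rev (α n j) _ ▸ hαa n j hj
  · rw [hA.relationSeq_one_sub x (Icc_subset_Icc_right (by omega) hj), Rat.cast_intCast]
    exact Padic.norm_int_le_one _

end Padic

theorem jacobiPerron_S_divisibility_general (p m : ℕ) [Fact p.Prime] (hm : 1 ≤ m)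
    (α : ℕ → ℕ → ℚ_[p]) (a : ℕ → ℕ → ℚ) (A : ℤ → ℕ → ℚ)
    (hα : IsJacobiPerronExpansion m α (fun n i ↦ (a n i : ℚ_[p])))
    (ha : ∀ n, ∀ i ∈ Icc 1 m, InZInvP p (a n i))
    (hαa : ∀ n, ∀ i ∈ Icc 1 m, ‖α n i - a n i‖ < 1) (hA : JPConv m a A) (x : ℕ → ℤ)
    (hdep : ∑ i ∈ Icc 1 m, (x i : ℚ_[p]) * α 0 i + x (m + 1) = 0) (n : ℕ) :
    (∃ z : ℤ, relationSeq m A x n = z ∧ (p : ℤ) ^ ((n + m - 1) / m) ∣ z) ∧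
    (∀ q r : ℕ, 1 ≤ r → r ≤ m → n = q * m + r →
      relationSeq m A x n = 0 ∨ (q : ℤ) < padicValRat p (relationSeq m A x n)) ∧
    (¬ m ∣ n → relationSeq m A x n = 0 ∨
      ((n / m : ℕ) : ℤ) < padicValRat p (relationSeq m A x n)) := by
  have hdvd (k : ℕ) (hk : k * m < n + m) : ∃ z : ℤ, relationSeq m A x n = z ∧ (p : ℤ) ^ k ∣ z :=
    (hA.inZInvP_relationSeq ha n).exists_int_eq_and_pow_dvd
      (hA.norm_relationSeq_le_zpow hm hα hαa hdep hk)
  have hval (q : ℕ) (hq : q * m < n) :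
      relationSeq m A x n = 0 ∨ (q : ℤ) < padicValRat p (relationSeq m A x n) :=
    eq_zero_or_lt_padicValRat (hdvd (q + 1) (by rw [Nat.succ_mul]; omega))
  refine ⟨hdvd _ ?_, fun q r hr _ hn ↦ hval q (by omega), fun hmn ↦ hval _ ?_⟩
  · exact (Nat.div_mul_le_self _ m).trans_lt (by omega)
  · exact (Nat.div_mul_le_self n m).lt_of_ne fun h ↦ hmn (Dvd.intro_left _ h)

/-- For an infinite run with a `ℚ`-linear dependence relation with coprime
integer coefficients, for every `n ≥ 1` the integer `Sₙ` is divisible by `p^⌈n/m⌉`; in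
particular, writing `n = q·m + r` with `1 ≤ r ≤ m`, one has `v_p(Sₙ) > q`, and
`v_p(Sₙ) > ⌊n/m⌋` whenever `m ∤ n` (the disjunct `Sₙ = 0` accounts for `v_p(0) = +∞`). -/
theorem jacobiPerron_S_divisibility (p m : ℕ) [hp : Fact p.Prime]
    (hp2 : 2 < p) (hm : 1 ≤ m)
    (α : ℕ → ℕ → ℚ_[p]) (a : ℕ → ℕ → ℚ) (A : ℤ → ℕ → ℚ)
    (hrun : JPRun p m α a) (hconv : JPConv m a A)
    (x : ℕ → ℤ) (hgcd : Finset.gcd (Finset.Icc 1 (m + 1)) x = 1)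
    (hdep : (∑ i ∈ Finset.Icc 1 m, ((x i : ℚ) : ℚ_[p]) * α 0 i) + ((x (m + 1) : ℤ) : ℚ_[p]) = 0)
    (S : ℤ → ℚ)
    (hS : ∀ n : ℤ, S n = ∑ i ∈ Finset.Icc 1 (m + 1), (x i : ℚ) * A (n - 1) i) :
    ∀ n : ℕ, 1 ≤ n →
      (∃ z : ℤ, S n = (z : ℚ) ∧ (p : ℤ) ^ ((n + m - 1) / m) ∣ z) ∧
      (∀ q r : ℕ, 1 ≤ r → r ≤ m → n = q * m + r →
        S n = 0 ∨ (q : ℤ) < padicValRat p (S n)) ∧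
      (¬ (m ∣ n) → S n = 0 ∨ ((n / m : ℕ) : ℤ) < padicValRat p (S n)) := by
  obtain rfl : S = relationSeq m A x := funext hS
  exact fun n _ ↦ jacobiPerron_S_divisibility_general p m hm α a A hrun.isJacobiPerronExpansion
    (fun n i hi ↦ ((hrun n).1 i hi).1) (fun n i hi ↦ ((hrun n).1 i hi).2.2) hconv x
    (by simpa only [Rat.cast_intCast] using hdep) n
end

section
/- Let (T_n)_{n ≥ −m} be a sequence of real numbers satisfying T_n = y_n^{(1)} T_{n-1} + ⋯ + y_n^{(m)} T_{n-m} + T_{n-m-1} for all n ≥ 1, where for every n ≥ 1 and i = 1,…,m the coefficient y_n^{(i)} is a rational number lying in ℤ[1/p] with |y_n^{(i)}|_∞ < p/2. Then lim_{n→+∞} T_n / p^n = 0 in ℝ. -/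
open Finset Filter

/-!
Put `a = p / 2`. The function `k ↦ (1 + a) ^ k` majorises the recurrence, because
`a * ∑ i ∈ Icc 1 m, (1 + a) ^ (n - i)` telescopes to `(1 + a) ^ n - (1 + a) ^ (n - m)`. A multiple
of it dominates `T` at the initial indices, hence at all later ones, so `T n = O((1 + p / 2) ^ n)`;
and `1 + p / 2 < p` as soon as `2 < p`.
-/

open Asymptotics

theorem sub_one_mul_sum_zpow_sub {K : Type*} [DivisionRing K] {r : K} (hr : r ≠ 0) (n : ℤ) (m : ℕ) :
    (r - 1) * ∑ i ∈ Icc 1 m, r ^ (n - i) = r ^ n - r ^ (n - m) := by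
  induction m with
  | zero => simp
  | succ m ih =>
    have hpow : r * r ^ (n - (m + 1 : ℕ)) = r ^ (n - m) := by
      rw [← zpow_one_add₀ hr]
      congr 1
      lia
    rw [sum_Icc_succ_top (by lia), mul_add, ih, sub_one_mul, hpow, sub_add_sub_cancel]

theorem mul_sum_zpow_sub_add_zpow_le {K : Type*} [Field K] [LinearOrder K] [IsStrictOrderedRing K]
    {a : K} (ha : 0 ≤ a) (n : ℤ) (m : ℕ) :
    a * ∑ i ∈ Icc 1 m, (1 + a) ^ (n - i) + (1 + a) ^ (n - m - 1) ≤ (1 + a) ^ n := by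
  have htel := sub_one_mul_sum_zpow_sub (by positivity : 1 + a ≠ 0) n m
  have hmono : (1 + a) ^ (n - m - 1) ≤ (1 + a) ^ (n - m) :=
    zpow_le_zpow_right₀ (by simpa) (by lia)
  rw [add_sub_cancel_left] at htel
  linarith

theorem le_of_le_recurrence_of_recurrence_le {R : Type*} [Semiring R] [PartialOrder R]
    [IsOrderedRing R] {a : R} (ha : 0 ≤ a) {m : ℕ} {u v : ℤ → R}
    (hu : ∀ n : ℕ, 1 ≤ n → u n ≤ a * ∑ i ∈ Icc 1 m, u (n - i) + u (n - m - 1))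
    (hv : ∀ n : ℕ, 1 ≤ n → a * ∑ i ∈ Icc 1 m, v (n - i) + v (n - m - 1) ≤ v n)
    (hinit : ∀ k ∈ Icc (-(m : ℤ)) 0, u k ≤ v k) {k : ℤ} (hk : -(m : ℤ) ≤ k) : u k ≤ v k := by
  induction k using Int.strongRec (m := 1) with
  | lt k hk_lt => exact hinit k (mem_Icc.2 ⟨hk, by lia⟩)
  | ge k hk_ge ih =>
    lift k to ℕ using by lia
    have hsum : ∑ i ∈ Icc 1 m, u (k - i) ≤ ∑ i ∈ Icc 1 m, v (k - i) := by
      refine sum_le_sum fun i hi => ?_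
      rw [mem_Icc] at hi
      exact ih _ (by lia) (by lia)
    calc
      u k ≤ a * ∑ i ∈ Icc 1 m, u (k - i) + u (k - m - 1) := hu k (by lia)
      _ ≤ a * ∑ i ∈ Icc 1 m, v (k - i) + v (k - m - 1) := by
        gcongr
        exact ih _ (by lia) (by lia)
      _ ≤ v k := hv k (by lia)

theorem exists_nonneg_forall_le_mul {ι K : Type*} [Field K] [LinearOrder K] [IsStrictOrderedRing K]
    (s : Finset ι) (f : ι → K) {g : ι → K} (hg : ∀ i ∈ s, 0 < g i) :
    ∃ C, 0 ≤ C ∧ ∀ i ∈ s, f i ≤ C * g i := by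
  classical
  obtain ⟨C, hC⟩ := (insert 0 (s.image fun i => f i / g i)).exists_le
  simp only [forall_mem_insert, forall_mem_image] at hC
  exact ⟨C, hC.1, fun i hi => (div_le_iff₀ (hg i hi)).1 (hC.2 hi)⟩

theorem exists_forall_le_mul_zpow_of_le_recurrence {K : Type*} [Field K] [LinearOrder K]
    [IsStrictOrderedRing K] {a : K} (ha : 0 ≤ a) {m : ℕ} {u : ℤ → K}
    (hu : ∀ n : ℕ, 1 ≤ n → u n ≤ a * ∑ i ∈ Icc 1 m, u (n - i) + u (n - m - 1)) :
    ∃ C, ∀ k : ℤ, -(m : ℤ) ≤ k → u k ≤ C * (1 + a) ^ k := by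
  obtain ⟨C, hC, hinit⟩ := exists_nonneg_forall_le_mul (Icc (-(m : ℤ)) 0) u
    (g := fun k => (1 + a) ^ k) fun k _ => by positivity
  refine ⟨C, fun k hk => le_of_le_recurrence_of_recurrence_le ha hu (fun n _ => ?_) hinit hk⟩
  calc
    a * ∑ i ∈ Icc 1 m, C * (1 + a) ^ ((n : ℤ) - i) + C * (1 + a) ^ ((n : ℤ) - m - 1)
      = C * (a * ∑ i ∈ Icc 1 m, (1 + a) ^ ((n : ℤ) - i) + (1 + a) ^ ((n : ℤ) - m - 1)) := by
        rw [← mul_sum]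
        ring
    _ ≤ C * (1 + a) ^ (n : ℤ) := by
      gcongr
      exact mul_sum_zpow_sub_add_zpow_le ha n m

section Recurrence

variable {R E : Type*} [SeminormedRing R] [SeminormedAddCommGroup E] [Module R E]
  [IsBoundedSMul R E] {a : ℝ} {m : ℕ} {T : ℤ → E} {y : ℕ → ℕ → R}

theorem norm_sum_smul_add_le {ι : Type*} {s : Finset ι} {c : ι → R} (hc : ∀ i ∈ s, ‖c i‖ ≤ a)
    (x : ι → E) (z : E) : ‖∑ i ∈ s, c i • x i + z‖ ≤ a * ∑ i ∈ s, ‖x i‖ + ‖z‖ := by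
  refine norm_add_le_of_le ?_ le_rfl
  rw [mul_sum]
  exact norm_sum_le_of_le s fun i hi =>
    (norm_smul_le _ _).trans (mul_le_mul_of_nonneg_right (hc i hi) (norm_nonneg _))

theorem isBigO_one_add_pow_of_recurrence (ha : 0 ≤ a)
    (hy : ∀ n : ℕ, 1 ≤ n → ∀ i ∈ Icc 1 m, ‖y n i‖ ≤ a)
    (hrec : ∀ n : ℕ, 1 ≤ n → T n = ∑ i ∈ Icc 1 m, y n i • T (n - i) + T (n - m - 1)) :
    (fun n : ℕ => T n) =O[atTop] fun n : ℕ => (1 + a) ^ n := by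
  obtain ⟨C, hC⟩ := exists_forall_le_mul_zpow_of_le_recurrence (m := m) (u := fun k => ‖T k‖) ha
    fun n hn => (congrArg norm (hrec n hn)).trans_le (norm_sum_smul_add_le (hy n hn) _ _)
  refine .of_bound C (.of_forall fun n => ?_)
  rw [Real.norm_of_nonneg (by positivity), ← zpow_natCast]
  exact hC n (by lia)

theorem recurrence_over_Y_tendsto_zero_general {q : ℝ} (ha : 0 ≤ a) (hq : 1 + a < q)
    (hy : ∀ n : ℕ, 1 ≤ n → ∀ i ∈ Icc 1 m, ‖y n i‖ ≤ a)
    (hrec : ∀ n : ℕ, 1 ≤ n → T n = ∑ i ∈ Icc 1 m, y n i • T (n - i) + T (n - m - 1)) :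
    (fun n : ℕ => T n) =o[atTop] fun n : ℕ => q ^ n :=
  (isBigO_one_add_pow_of_recurrence ha hy hrec).trans_isLittleO
    (isLittleO_pow_pow_of_lt_left (by positivity) hq)

end Recurrence

/-- If a real sequence `(Tₙ)_{n ≥ -m}` satisfies
`Tₙ = yₙ⁽¹⁾T_{n-1} + ⋯ + yₙ⁽ᵐ⁾T_{n-m} + T_{n-m-1}` for `n ≥ 1`, where the coefficients
`yₙ⁽ⁱ⁾` are rationals in `ℤ[1/p]` with `|yₙ⁽ⁱ⁾|_∞ < p/2`, then `Tₙ/pⁿ → 0` in `ℝ`. -/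
theorem recurrence_over_Y_tendsto_zero (p m : ℕ) (hp : p.Prime) (hp2 : 2 < p) (hm : 1 ≤ m)
    (T : ℤ → ℝ) (y : ℕ → ℕ → ℚ)
    (hy : ∀ n : ℕ, 1 ≤ n → ∀ i ∈ Finset.Icc 1 m,
      InZInvP p (y n i) ∧ |y n i| < (p : ℚ) / 2)
    (hrec : ∀ n : ℕ, 1 ≤ n →
      T n = (∑ i ∈ Finset.Icc 1 m, (y n i : ℝ) * T ((n : ℤ) - i)) + T ((n : ℤ) - m - 1)) :
    Filter.Tendsto (fun n : ℕ => T n / (p : ℝ) ^ n) Filter.atTop (nhds 0) := by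
  have hp2' : (2 : ℝ) < p := by exact_mod_cast hp2
  have hy' : ∀ n : ℕ, 1 ≤ n → ∀ i ∈ Icc 1 m, ‖(y n i : ℝ)‖ ≤ (p : ℝ) / 2 := fun n hn i hi => by
    have hcast : ((|y n i| : ℚ) : ℝ) ≤ (p / 2 : ℚ) := Rat.cast_le.2 (hy n hn i hi).2.le
    rw [Real.norm_eq_abs]
    simpa only [Rat.cast_abs, Rat.cast_div, Rat.cast_natCast, Rat.cast_ofNat] using hcast
  exact (recurrence_over_Y_tendsto_zero_general (by positivity) (by linarith) hy'
    hrec).tendsto_div_nhds_zero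
end

section
/- For an infinite run of the p-adic Jacobi–Perron algorithm with a ℚ-linear dependence relation as above, the real sequence S_n / p^n tends to 0 as n → ∞ (with respect to the Euclidean absolute value). -/
open Finset Filter

/-!
Each `A^{(i)}` obeys a linear recurrence of order `m + 1` whose coefficients are at most `p / 2` in
absolute value, except that the lowest one equals `1`. Since
`(h + 1)^d = h ∑_{j<d} (h + 1)^j + 1`, the geometric sequence of ratio `h + 1` majorizes such a
recurrence with coefficients bounded by `h`. Hence `A_n^{(i)}`, and with it `S_n`, is
`O((p / 2 + 1)^n)`, and `p / 2 + 1 < p` as soon as `p > 2`.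
-/

open Asymptotics

theorem le_mul_add_one_pow_of_le_mul_sum {R : Type*} [CommSemiring R] [PartialOrder R]
    [IsOrderedRing R] {d : ℕ} {h C : R} {v : ℕ → R} (hd : 0 < d) (hh : 0 ≤ h)
    (hv : ∀ n, v (n + d) ≤ h * ∑ j ∈ range d, v (n + j) + v n)
    (hinit : ∀ k < d, v k ≤ C * (h + 1) ^ k) (k : ℕ) : v k ≤ C * (h + 1) ^ k := by
  induction k using Nat.strong_induction_on with
  | _ k ih =>
    obtain hk | hk := lt_or_ge k d
    · exact hinit k hk
    obtain ⟨n, rfl⟩ := Nat.exists_eq_add_of_le' hk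
    calc v (n + d) ≤ h * ∑ j ∈ range d, v (n + j) + v n := hv n
      _ ≤ h * ∑ j ∈ range d, C * (h + 1) ^ (n + j) + C * (h + 1) ^ n := by
        gcongr with j hj
        · exact ih _ (by simpa using hj)
        · exact ih n (by omega)
      _ = C * (h + 1) ^ n * ((∑ j ∈ range d, (h + 1) ^ j) * h + 1) := by
        simp only [pow_add _ n, ← mul_assoc, ← mul_sum]
        ring
      _ = C * (h + 1) ^ (n + d) := by rw [geom_sum_mul_add, pow_add, mul_assoc]

theorem isBigO_add_one_pow_of_norm_le {E : Type*} [SeminormedAddGroup E] {d : ℕ} {h : ℝ}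
    {u : ℕ → E} (hd : 0 < d) (hh : 0 ≤ h)
    (hu : ∀ n, ‖u (n + d)‖ ≤ h * ∑ j ∈ range d, ‖u (n + j)‖ + ‖u n‖) :
    u =O[atTop] fun n ↦ (h + 1) ^ n := by
  have hinit : ∀ k < d, ‖u k‖ ≤ (∑ l ∈ range d, ‖u l‖) * (h + 1) ^ k := fun k hk ↦
    calc ‖u k‖ ≤ ∑ l ∈ range d, ‖u l‖ :=
          single_le_sum (f := fun l ↦ ‖u l‖) (fun _ _ ↦ norm_nonneg _) (mem_range.2 hk)
      _ ≤ (∑ l ∈ range d, ‖u l‖) * (h + 1) ^ k :=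
          le_mul_of_one_le_right (by positivity) (one_le_pow₀ (by linarith))
  refine .of_bound (∑ l ∈ range d, ‖u l‖) (.of_forall fun n ↦ ?_)
  rw [Real.norm_of_nonneg (by positivity)]
  exact le_mul_add_one_pow_of_le_mul_sum hd hh hu hinit n

namespace JPConv

variable {m : ℕ} {a : ℕ → ℕ → ℚ} {A : ℤ → ℕ → ℚ} {h : ℝ} {i : ℕ}

theorem abs_le_mul_sum (hA : JPConv m a A) (hh : 0 ≤ h)
    (ha : ∀ n, ∀ j ∈ Icc 1 m, |(a n j : ℝ)| ≤ h) (hi : i ∈ Icc 1 (m + 1)) (n : ℕ) :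
    |(A n i : ℝ)| ≤
      h * ∑ j ∈ range (m + 1), |(A (n + j - (m + 1)) i : ℝ)| + |(A (n - (m + 1)) i : ℝ)| := by
  have hreflect : ∑ j ∈ Icc 1 m, |(A (n - j) i : ℝ)| =
      ∑ j ∈ range m, |(A (n + (j + 1 : ℕ) - (m + 1)) i : ℝ)| := by
    refine sum_nbij' (m - ·) (m - ·) (by grind) (by grind) (by grind) (by grind) fun j hj ↦ ?_
    congr 3
    grind
  calc |(A n i : ℝ)|
      = |∑ j ∈ Icc 1 m, (a n j : ℝ) * A (n - j) i + A (n - (m + 1)) i| := by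
        rw [hA.2 n i hi, sub_sub]
        push_cast
        rfl
    _ ≤ ∑ j ∈ Icc 1 m, |(a n j : ℝ) * A (n - j) i| + |(A (n - (m + 1)) i : ℝ)| :=
        (abs_add_le _ _).trans (by gcongr; exact abs_sum_le_sum_abs _ _)
    _ ≤ h * ∑ j ∈ Icc 1 m, |(A (n - j) i : ℝ)| + |(A (n - (m + 1)) i : ℝ)| := by
        simp only [abs_mul, mul_sum]
        gcongr with j hj
        exact ha n j hj
    _ ≤ h * ∑ j ∈ range (m + 1), |(A (n + j - (m + 1)) i : ℝ)| + |(A (n - (m + 1)) i : ℝ)| := by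
        rw [hreflect, sum_range_succ']
        gcongr
        exact le_add_of_nonneg_right (abs_nonneg _)

theorem isBigO_add_one_pow (hA : JPConv m a A) (hh : 0 ≤ h)
    (ha : ∀ n, ∀ j ∈ Icc 1 m, |(a n j : ℝ)| ≤ h) (hi : i ∈ Icc 1 (m + 1)) :
    (fun n : ℕ ↦ (A (n - 1) i : ℝ)) =O[atTop] fun n ↦ (h + 1) ^ n := by
  have hshift : (fun k : ℕ ↦ (A (k - (m + 1)) i : ℝ)) =O[atTop] fun k ↦ (h + 1) ^ k := by
    refine isBigO_add_one_pow_of_norm_le m.succ_pos hh fun n ↦ ?_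
    simpa only [Real.norm_eq_abs, Nat.cast_add, Nat.cast_succ, add_sub_cancel_right]
      using hA.abs_le_mul_sum hh ha hi n
  calc (fun n : ℕ ↦ (A (n - 1) i : ℝ))
      = fun n : ℕ ↦ (A ((n + m : ℕ) - (m + 1)) i : ℝ) := by
        ext n
        congr 2
        push_cast
        ring
    _ =O[atTop] fun n ↦ (h + 1) ^ (n + m) := hshift.comp_tendsto (tendsto_add_atTop_nat m)
    _ =O[atTop] fun n ↦ (h + 1) ^ n := by
        simp only [pow_add _ _ m, mul_comm _ ((h + 1) ^ m)]
        exact isBigO_const_mul_self _ _ _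

end JPConv

theorem jacobiPerron_S_over_pow_tendsto_zero_general {m : ℕ} {a : ℕ → ℕ → ℚ} {A : ℤ → ℕ → ℚ}
    {h r : ℝ} (hA : JPConv m a A) (hh : 0 ≤ h) (ha : ∀ n, ∀ j ∈ Icc 1 m, |(a n j : ℝ)| ≤ h)
    (hr : h + 1 < r) (x : ℕ → ℝ) :
    Tendsto (fun n : ℕ ↦ (∑ i ∈ Icc 1 (m + 1), x i * A (n - 1) i) / r ^ n) atTop (nhds 0) := by
  have hpow : (fun n : ℕ ↦ (h + 1) ^ n) =o[atTop] fun n ↦ r ^ n :=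
    isLittleO_pow_pow_of_lt_left (by positivity) hr
  refine IsLittleO.tendsto_div_nhds_zero (.fun_sum fun i hi ↦ .const_mul_left ?_ (x i))
  exact (hA.isBigO_add_one_pow hh ha hi).trans_isLittleO hpow

/-- For an infinite run with a `ℚ`-linear dependence relation with coprime
integer coefficients, the real sequence `Sₙ/pⁿ` tends to `0` (in the Euclidean absolute
value). -/
theorem jacobiPerron_S_over_pow_tendsto_zero (p m : ℕ) [hp : Fact p.Prime]
    (hp2 : 2 < p) (hm : 1 ≤ m)
    (α : ℕ → ℕ → ℚ_[p]) (a : ℕ → ℕ → ℚ) (A : ℤ → ℕ → ℚ)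
    (hrun : JPRun p m α a) (hconv : JPConv m a A)
    (x : ℕ → ℤ) (hgcd : Finset.gcd (Finset.Icc 1 (m + 1)) x = 1)
    (hdep : (∑ i ∈ Finset.Icc 1 m, ((x i : ℚ) : ℚ_[p]) * α 0 i) + ((x (m + 1) : ℤ) : ℚ_[p]) = 0)
    (S : ℤ → ℚ)
    (hS : ∀ n : ℤ, S n = ∑ i ∈ Finset.Icc 1 (m + 1), (x i : ℚ) * A (n - 1) i) :
    Filter.Tendsto (fun n : ℕ => ((S n : ℚ) : ℝ) / (p : ℝ) ^ n) Filter.atTop (nhds 0) := by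
  have hp' : (2 : ℝ) < p := by exact_mod_cast hp2
  have ha : ∀ n, ∀ j ∈ Icc 1 m, |(a n j : ℝ)| ≤ p / 2 := fun n j hj ↦ by
    simpa only [Rat.cast_abs, Rat.cast_div, Rat.cast_natCast, Rat.cast_ofNat]
      using (Rat.cast_le (K := ℝ)).2 ((hrun n).1 j hj).2.1.le
  simpa [hS] using jacobiPerron_S_over_pow_tendsto_zero_general hconv (by positivity) ha
    (by linarith) fun i ↦ (x i : ℝ)
end

section
/- Suppose that for some t ≥ 0 there are finite sequences of complete quotients α_n^{(i)} ∈ ℚ_p and partial quotients a_n^{(i)} (0 ≤ n ≤ t, i = 1,…,m) satisfying the p-adic Jacobi–Perron relations for all 0 ≤ n < t, and that α_t^{(m)} = a_t^{(m)} (so the algorithm terminates in finitely many steps). Then 1, α_0^{(1)}, …, α_0^{(m)} are linearly dependent over ℚ. -/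
open Finset Filter

/-!
Put `δ = α_n⁽ᵐ⁾ - a_n⁽ᵐ⁾`. Multiplying `(1, α_{n+1}⁽¹⁾, …, α_{n+1}⁽ᵐ⁾)` by `δ` gives
`(δ, 1, α_n⁽¹⁾ - a_n⁽¹⁾, …, α_n⁽ᵐ⁻¹⁾ - a_n⁽ᵐ⁻¹⁾)`, which has the same span over `ℚ` as
`(1, α_n⁽¹⁾, …, α_n⁽ᵐ⁾)`. Hence the dimension of the span of `1` and the complete quotients cannot
decrease from the first step to the last, where it is at most `m` because `α_t⁽ᵐ⁾` is rational.
-/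

section JacobiPerron

open Module Submodule

variable {R : Type*} [CommRing R]

section Span

variable {L : Type*} [Ring L] [Algebra R L] {m : ℕ} {x : ℕ → L}

variable (R m x) in
/-- The `R`-span of `1, x 1, …, x m`, which measures the linear dependence of `1` and
the complete quotients through its rank. -/
def completeQuotientSpan : Submodule R L := span R (insert 1 (x '' Set.Icc 1 m))

instance : Module.Finite R (completeQuotientSpan R m x) :=
  Module.Finite.span_of_finite R (((Set.finite_Icc 1 m).image x).insert 1)

theorem one_mem_completeQuotientSpan : (1 : L) ∈ completeQuotientSpan R m x :=
  subset_span (Set.mem_insert _ _)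

theorem mem_completeQuotientSpan {i : ℕ} (hi : i ∈ Set.Icc 1 m) :
    x i ∈ completeQuotientSpan R m x :=
  subset_span (Set.mem_insert_of_mem _ (Set.mem_image_of_mem x hi))

theorem finrank_completeQuotientSpan_le_of_eq_algebraMap [Nontrivial R] (hm : 1 ≤ m) {b : R}
    (hb : x m = algebraMap R L b) : finrank R (completeQuotientSpan R m x) ≤ m := by
  classical
  have span_eq : completeQuotientSpan R m x = span R (insert 1 ((Ico 1 m).image x) : Finset L) := by
    have x_mem : x m ∈ span R (insert 1 (x '' Set.Ico 1 m)) := by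
      rw [hb, Algebra.algebraMap_eq_smul_one]
      exact smul_mem _ _ (subset_span (Set.mem_insert _ _))
    rw [completeQuotientSpan, ← Set.Ico_insert_right hm, Set.image_insert_eq, Set.insert_comm,
      span_insert_eq_span x_mem]
    simp
  calc finrank R (completeQuotientSpan R m x)
      ≤ #(insert 1 ((Ico 1 m).image x)) := span_eq ▸ finrank_span_finset_le_card _
    _ ≤ #((Ico 1 m).image x) + 1 := card_insert_le _ _
    _ ≤ #(Ico 1 m) + 1 := by gcongr; exact card_image_le
    _ = m := by simp [hm]

theorem exists_relation_of_finrank_completeQuotientSpan_le [Nontrivial R]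
    (h : finrank R (completeQuotientSpan R m x) ≤ m) :
    ∃ c : ℕ → R, (∃ i ∈ Icc 1 (m + 1), c i ≠ 0) ∧
      ∑ i ∈ Icc 1 m, c i • x i + algebraMap R L (c (m + 1)) = 0 := by
  let v := Function.update x (m + 1) 1
  have v_last : v (m + 1) = 1 := Function.update_self ..
  have v_eq {i : ℕ} (hi : i ∈ Set.Icc 1 m) : v i = x i :=
    Function.update_of_ne (Nat.lt_succ_of_le hi.2).ne _ _
  have image_v : v '' Icc 1 (m + 1) = insert 1 (x '' Set.Icc 1 m) := by
    rw [coe_Icc, ← Set.insert_Icc_right_eq_Icc_add_one (by lia), Set.image_insert_eq, v_last,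
      Set.image_congr fun _ => v_eq]
  have v_dep : ¬ LinearIndepOn R v (Icc 1 (m + 1)) := by
    have card_eq : Fintype.card (Icc 1 (m + 1) : Set ℕ) = m + 1 := by simp
    rw [LinearIndepOn, linearIndependent_iff_card_le_finrank_span, ← Set.image_eq_range, image_v,
      card_eq, not_le]
    exact Nat.lt_succ_of_le h
  obtain ⟨c, relation, nonzero⟩ := not_linearIndepOn_finset_iff.mp v_dep
  refine ⟨c, nonzero, ?_⟩
  calc ∑ i ∈ Icc 1 m, c i • x i + algebraMap R L (c (m + 1))
      = ∑ i ∈ Icc 1 m, c i • v i + c (m + 1) • v (m + 1) := by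
        rw [v_last, Algebra.algebraMap_eq_smul_one]
        exact congrArg (· + _) (sum_congr rfl fun i hi => by rw [v_eq (mem_Icc.mp hi)])
    _ = 0 := by rw [← sum_Icc_succ_top (by lia), relation]

end Span

section Run

variable {L : Type*} [DivisionRing L] [Algebra R L] {m : ℕ} {x y : ℕ → L} {a : ℕ → R}

/-- One step of the `m`-dimensional Jacobi–Perron algorithm, from the complete quotients
`x 1, …, x m` to `y 1, …, y m`. The partial quotients `a 1, …, a m` may be any elements of the
base ring; values outside the indices `1, …, m` are ignored. -/
structure IsJacobiPerronStep (m : ℕ) (x : ℕ → L) (a : ℕ → R) (y : ℕ → L) : Prop where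
  ne : x m ≠ algebraMap R L (a m)
  apply_one : y 1 = (x m - algebraMap R L (a m))⁻¹
  apply_of_two_le : ∀ i ∈ Icc 2 m,
    y i = (x (i - 1) - algebraMap R L (a (i - 1))) / (x m - algebraMap R L (a m))

namespace IsJacobiPerronStep

theorem sub_algebraMap_ne_zero (h : IsJacobiPerronStep m x a y) : x m - algebraMap R L (a m) ≠ 0 :=
  sub_ne_zero.mpr h.ne

theorem apply_one_mul_sub (h : IsJacobiPerronStep m x a y) :
    y 1 * (x m - algebraMap R L (a m)) = 1 := by
  rw [h.apply_one, inv_mul_cancel₀ h.sub_algebraMap_ne_zero]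

theorem apply_succ_mul_sub (h : IsJacobiPerronStep m x a y) {i : ℕ} (hi : i ∈ Set.Ico 1 m) :
    y (i + 1) * (x m - algebraMap R L (a m)) = x i - algebraMap R L (a i) := by
  obtain ⟨hi₁, him⟩ := hi
  rw [h.apply_of_two_le (i + 1) (mem_Icc.mpr (by lia)), Nat.add_sub_cancel,
    div_mul_cancel₀ _ h.sub_algebraMap_ne_zero]

theorem completeQuotientSpan_le_map (h : IsJacobiPerronStep m x a y) (hm : 1 ≤ m) :
    completeQuotientSpan R m x ≤
      (completeQuotientSpan R m y).map (LinearMap.mulRight R (x m - algebraMap R L (a m))) := by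
  set W := (completeQuotientSpan R m y).map (LinearMap.mulRight R (x m - algebraMap R L (a m)))
  have one_mem : (1 : L) ∈ W := ⟨y 1, mem_completeQuotientSpan ⟨le_rfl, hm⟩, h.apply_one_mul_sub⟩
  have mem_of_sub_mem {i : ℕ} (hi : x i - algebraMap R L (a i) ∈ W) : x i ∈ W := by
    have algebraMap_mem : algebraMap R L (a i) ∈ W := by
      rw [Algebra.algebraMap_eq_smul_one]
      exact W.smul_mem _ one_mem
    exact (sub_mem_iff_left W algebraMap_mem).mp hi
  refine span_le.mpr (Set.insert_subset one_mem ?_)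
  rintro _ ⟨i, ⟨hi₁, him⟩, rfl⟩
  apply mem_of_sub_mem
  obtain rfl | hlt := him.eq_or_lt
  · exact ⟨1, one_mem_completeQuotientSpan, one_mul _⟩
  · exact ⟨y (i + 1), mem_completeQuotientSpan ⟨by lia, hlt⟩, h.apply_succ_mul_sub ⟨hi₁, hlt⟩⟩

theorem finrank_completeQuotientSpan_le (h : IsJacobiPerronStep m x a y) (hm : 1 ≤ m) :
    finrank R (completeQuotientSpan R m x) ≤ finrank R (completeQuotientSpan R m y) :=
  have : Nontrivial R := (algebraMap R L).domain_nontrivial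
  (finrank_mono (h.completeQuotientSpan_le_map hm)).trans (finrank_map_le _ _)

end IsJacobiPerronStep

theorem finrank_completeQuotientSpan_zero_le {α : ℕ → ℕ → L} {a : ℕ → ℕ → R} (hm : 1 ≤ m) {t : ℕ}
    (hstep : ∀ n < t, IsJacobiPerronStep m (α n) (a n) (α (n + 1))) :
    finrank R (completeQuotientSpan R m (α 0)) ≤ finrank R (completeQuotientSpan R m (α t)) := by
  induction t with
  | zero => exact le_rfl
  | succ t ih =>
    exact (ih fun n hn => hstep n (hn.trans t.lt_succ_self)).trans
      ((hstep t t.lt_succ_self).finrank_completeQuotientSpan_le hm)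

theorem jacobiPerron_finite_implies_lin_dep_general (hm : 1 ≤ m) (t : ℕ) (α : ℕ → ℕ → L)
    (a : ℕ → ℕ → R) (hstep : ∀ n < t, IsJacobiPerronStep m (α n) (a n) (α (n + 1)))
    (hterm : α t m = algebraMap R L (a t m)) :
    ∃ c : ℕ → R, (∃ i ∈ Icc 1 (m + 1), c i ≠ 0) ∧
      ∑ i ∈ Icc 1 m, c i • α 0 i + algebraMap R L (c (m + 1)) = 0 :=
  have : Nontrivial R := (algebraMap R L).domain_nontrivial
  exists_relation_of_finrank_completeQuotientSpan_le <|
    (finrank_completeQuotientSpan_zero_le hm hstep).trans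
      (finrank_completeQuotientSpan_le_of_eq_algebraMap hm hterm)

end Run

end JacobiPerron

/-- If a finite run of the `p`-adic Jacobi–Perron algorithm (complete
quotients `α n i` and partial quotients `a n i` for `0 ≤ n ≤ t`, satisfying the recurrences
for `0 ≤ n < t`) terminates, i.e. `α t m = a t m`, then `1, α₀⁽¹⁾, …, α₀⁽ᵐ⁾` are linearly
dependent over `ℚ`. -/
theorem jacobiPerron_finite_implies_lin_dep (p m : ℕ) [hp : Fact p.Prime]
    (hp2 : 2 < p) (hm : 1 ≤ m)
    (t : ℕ) (α : ℕ → ℕ → ℚ_[p]) (a : ℕ → ℕ → ℚ)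
    (hs : ∀ n ≤ t, ∀ i ∈ Finset.Icc 1 m, IsSValue p (α n i) (a n i))
    (hrec : ∀ n < t,
      α n m ≠ ((a n m : ℚ) : ℚ_[p]) ∧
      α (n + 1) 1 = (α n m - ((a n m : ℚ) : ℚ_[p]))⁻¹ ∧
      ∀ i ∈ Finset.Icc 2 m,
        α (n + 1) i = (α n (i - 1) - ((a n (i - 1) : ℚ) : ℚ_[p])) / (α n m - ((a n m : ℚ) : ℚ_[p])))
    (hterm : α t m = ((a t m : ℚ) : ℚ_[p])) :
    ∃ c : ℕ → ℚ, (∃ i ∈ Finset.Icc 1 (m + 1), c i ≠ 0) ∧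
      (∑ i ∈ Finset.Icc 1 m, ((c i : ℚ) : ℚ_[p]) * α 0 i) + ((c (m + 1) : ℚ) : ℚ_[p]) = 0 := by
  simpa [Algebra.smul_def] using jacobiPerron_finite_implies_lin_dep_general hm t α a
    (fun n hn => ⟨(hrec n hn).1, (hrec n hn).2.1, (hrec n hn).2.2⟩) hterm
end

section
/- There is no infinite run of the p-adic Jacobi–Perron algorithm whose input consists of rational numbers: if α_n^{(i)} ∈ ℚ_p and a_n^{(i)} (n ≥ 0, i = 1,…,m) form an infinite run of the algorithm, then at least one of α_0^{(1)}, …, α_0^{(m)} is not in the image of ℚ in ℚ_p. Equivalently, for every rational input (α_0^{(1)}, …, α_0^{(m)}) ∈ ℚ^m the p-adic Jacobi–Perron algorithm terminates in a finite number of steps. -/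
open Finset Filter

/-!
Clear the denominators of a rational input and run the algorithm on projective representatives
`v n = (v n 0 : … : v n m)` of `(α n 1 : … : α n m : 1)`; no division occurs, so all entries stay in
`ℤ[1/p]`. The last entry `v n m` is `∏_{k < n} (α k m - a k m)` times a nonzero integer, hence
`p`-adically at most `p⁻ⁿ`, and a nonzero element of `ℤ[1/p]` this small satisfies `pⁿ ≤ |v n m|`.
On the other hand, `|a n i| < p / 2` makes the height `∑ pⁱ |v n i|` satisfy
`height (v (n + 1)) + |v n m| ≤ p * height (v n)`, so `height (v n) / pⁿ` drops by at least `1 / p`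
at every step, although it is nonnegative.
-/

namespace InZInvP

variable {p : ℕ}

theorem intCast (z : ℤ) : InZInvP p z := ⟨z, 0, by simp only [pow_zero, div_one]⟩

theorem sub_mul (hp : p ≠ 0) {a b c : ℚ} (ha : InZInvP p a) (hb : InZInvP p b)
    (hc : InZInvP p c) : InZInvP p (a - b * c) := by
  obtain ⟨z, k, rfl⟩ := ha
  obtain ⟨w, l, rfl⟩ := hb
  obtain ⟨v, j, rfl⟩ := hc
  refine ⟨z * p ^ (l + j) - w * v * p ^ k, k + (l + j), ?_⟩
  push_cast
  field_simp
  ring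

theorem pow_le_abs_of_norm_le [hp : Fact p.Prime] {u : ℚ} (hu : InZInvP p u) (hu0 : u ≠ 0)
    {n : ℕ} (hn : ‖(u : ℚ_[p])‖ ≤ (p : ℝ)⁻¹ ^ n) : (p : ℚ) ^ n ≤ |u| := by
  obtain ⟨z, k, rfl⟩ := hu
  have hp0 : (0 : ℚ) < p := by exact_mod_cast hp.out.pos
  have hz : z ≠ 0 := by
    rintro rfl
    exact hu0 (by simp only [Int.cast_zero, zero_div])
  have norm_z_le : ‖(z : ℚ_[p])‖ ≤ (p : ℝ) ^ (-((n + k : ℕ) : ℤ)) := by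
    have hpk : ((p : ℚ) ^ k) ≠ 0 := by positivity
    calc ‖(z : ℚ_[p])‖ = ‖(((z : ℚ) / (p : ℚ) ^ k : ℚ) : ℚ_[p]) * (p : ℚ_[p]) ^ k‖ := by
          congr 1
          exact_mod_cast (div_mul_cancel₀ (z : ℚ) hpk).symm
      _ ≤ (p : ℝ)⁻¹ ^ n * (p : ℝ)⁻¹ ^ k := by
          rw [norm_mul, norm_pow, Padic.norm_p]
          gcongr
      _ = (p : ℝ) ^ (-((n + k : ℕ) : ℤ)) := by
          rw [← pow_add, zpow_neg, zpow_natCast, inv_pow]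
  have dvd_z : (p : ℤ) ^ (n + k) ∣ z := by
    exact_mod_cast (Padic.norm_int_le_pow_iff_dvd z (n + k)).mp norm_z_le
  have le_abs_z : (p : ℤ) ^ (n + k) ≤ |z| :=
    Int.le_of_dvd (abs_pos.mpr hz) ((dvd_abs _ _).mpr dvd_z)
  rw [abs_div, abs_of_pos (pow_pos hp0 k), le_div_iff₀ (pow_pos hp0 k), ← pow_add]
  exact_mod_cast le_abs_z

end InZInvP

theorem exists_integral_projective_representative (R : Type*) {K : Type*} [CommRing R]
    [Nontrivial R] [CommRing K] [Algebra R K] [IsFractionRing R K] (m : ℕ) (r : ℕ → K) :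
    ∃ x : ℕ → R, x m ≠ 0 ∧ ∀ i < m, algebraMap R K (x i) = r i * algebraMap R K (x m) := by
  obtain ⟨d, hd⟩ := IsLocalization.exist_integer_multiples (nonZeroDivisors R) (range m) r
  choose! z hz using hd
  refine ⟨Function.update z m d, ?_, fun i hi => ?_⟩
  · simpa only [Function.update_self] using nonZeroDivisors.coe_ne_zero d
  · rw [Function.update_of_ne hi.ne, Function.update_self, hz i (mem_range.mpr hi),
      Algebra.smul_def, mul_comm]

theorem exists_int_projective_representative_of_mem_range_ratCast {K : Type*}
    [DivisionRing K] [CharZero K] {m : ℕ} {β : ℕ → K}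
    (hβ : ∀ i < m, β i ∈ Set.range ((↑) : ℚ → K)) :
    ∃ x : ℕ → ℤ, x m ≠ 0 ∧ ∀ i < m, (x i : K) = β i * x m := by
  choose! r hr using hβ
  obtain ⟨x, hxm, hx⟩ := exists_integral_projective_representative ℤ m r
  refine ⟨x, hxm, fun i hi => ?_⟩
  rw [← hr i hi]
  exact_mod_cast congrArg ((↑) : ℚ → K) (hx i hi)

theorem not_forall_succ_add_pow_le_mul {K : Type*} [CommRing K] [LinearOrder K]
    [IsStrictOrderedRing K] [Archimedean K] {b : K} (hb : 0 < b) {h : ℕ → K}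
    (h_nonneg : ∀ n, 0 ≤ h n) : ¬ ∀ n, h (n + 1) + b ^ n ≤ b * h n := by
  intro h_succ
  have descent : ∀ n : ℕ, b * h n + n * b ^ n ≤ b ^ n * (b * h 0) := by
    intro n
    induction n with
    | zero => simp only [Nat.cast_zero, zero_mul, add_zero, pow_zero, one_mul, le_refl]
    | succ n ih =>
      calc b * h (n + 1) + (n + 1 : ℕ) * b ^ (n + 1)
          = b * (h (n + 1) + b ^ n) + b * (n * b ^ n) := by push_cast; ring
        _ ≤ b * (b * h n) + b * (n * b ^ n) := by gcongr; exact h_succ n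
        _ = b * (b * h n + n * b ^ n) := by ring
        _ ≤ b * (b ^ n * (b * h 0)) := by gcongr
        _ = b ^ (n + 1) * (b * h 0) := by ring
  obtain ⟨n, hn⟩ := exists_nat_gt (b * h 0)
  have : b ^ n * (b * h 0) < b ^ n * n := by gcongr
  linarith [descent n, mul_nonneg hb.le (h_nonneg n)]

/-- The Jacobi–Perron recursion on projective representatives, started at `x` and driven by the
partial quotients `a`. Entries are indexed from `0`: the complete quotient `α n (i + 1)` of the
algorithm is the ratio of the entries `i` and `m` (for `i < m`). -/
def homogeneousQuotient {R : Type*} [Ring R] (m : ℕ) (a : ℕ → ℕ → R) (x : ℕ → R) : ℕ → ℕ → R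
  | 0, i => x i
  | n + 1, 0 => homogeneousQuotient m a x n m
  | n + 1, i + 1 => homogeneousQuotient m a x n i - a n (i + 1) * homogeneousQuotient m a x n m

theorem inZInvP_homogeneousQuotient {p m : ℕ} (hp : p ≠ 0) {a : ℕ → ℕ → ℚ} {x : ℕ → ℚ}
    (ha : ∀ n, ∀ i < m, InZInvP p (a n (i + 1))) (hx : ∀ i ≤ m, InZInvP p (x i)) (n : ℕ) :
    ∀ i ≤ m, InZInvP p (homogeneousQuotient m a x n i) := by
  induction n with
  | zero => exact hx
  | succ n ih =>
    rintro (_ | i) hi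
    · exact ih m le_rfl
    · exact (ih i (by omega)).sub_mul hp (ha n i hi) (ih m le_rfl)

/-- The weighted height `∑_{i ≤ m} bⁱ |v i|`. The geometric weights compensate the shift of the
entries in the Jacobi–Perron recursion. -/
def weightedHeight {K : Type*} [Ring K] [LinearOrder K] (b : K) (m : ℕ) (v : ℕ → K) : K :=
  ∑ i ∈ range (m + 1), b ^ i * |v i|

theorem weightedHeight_nonneg {K : Type*} [Ring K] [LinearOrder K] [IsOrderedRing K] {b : K}
    (hb : 0 ≤ b) (m : ℕ) (v : ℕ → K) : 0 ≤ weightedHeight b m v :=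
  sum_nonneg fun i _ => mul_nonneg (pow_nonneg hb i) (abs_nonneg (v i))

section HeightDescent

variable {K : Type*} [Field K] [LinearOrder K] [IsStrictOrderedRing K]

theorem two_add_half_mul_sum_pow_le {b : K} (hb : 2 ≤ b) (m : ℕ) :
    2 + b / 2 * ∑ i ∈ range m, b ^ (i + 1) ≤ b ^ (m + 1) := by
  induction m with
  | zero => simpa only [range_zero, sum_empty, mul_zero, add_zero, zero_add, pow_one] using hb
  | succ m ih =>
    calc 2 + b / 2 * ∑ i ∈ range (m + 1), b ^ (i + 1)
        = (2 + b / 2 * ∑ i ∈ range m, b ^ (i + 1)) + b / 2 * b ^ (m + 1) := by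
          rw [sum_range_succ]; ring
      _ ≤ b / 2 * b ^ (m + 1) + b / 2 * b ^ (m + 1) := by
          have one_le_half : 1 ≤ b / 2 := by linarith
          have pow_nonneg : 0 ≤ b ^ (m + 1) := by positivity
          gcongr
          exact ih.trans (le_mul_of_one_le_left pow_nonneg one_le_half)
      _ = b ^ (m + 1 + 1) := by ring

theorem weightedHeight_homogeneousQuotient_succ_add_le {b : K} (hb : 2 ≤ b) {m : ℕ}
    {a : ℕ → ℕ → K} (x : ℕ → K) {n : ℕ} (ha : ∀ i < m, |a n (i + 1)| ≤ b / 2) :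
    weightedHeight b m (homogeneousQuotient m a x (n + 1)) + |homogeneousQuotient m a x n m| ≤
      b * weightedHeight b m (homogeneousQuotient m a x n) := by
  set v := homogeneousQuotient m a x n with hv
  have entry_le : ∀ i < m, |homogeneousQuotient m a x (n + 1) (i + 1)| ≤ |v i| + b / 2 * |v m| := by
    intro i hi
    calc |v i - a n (i + 1) * v m| ≤ |v i| + |a n (i + 1)| * |v m| := by
          rw [← abs_mul]; exact abs_sub _ _
      _ ≤ |v i| + b / 2 * |v m| := by gcongr; exact ha i hi
  calc weightedHeight b m (homogeneousQuotient m a x (n + 1)) + |v m|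
      = ∑ i ∈ range m, b ^ (i + 1) * |homogeneousQuotient m a x (n + 1) (i + 1)| + 2 * |v m| := by
        rw [weightedHeight, sum_range_succ', homogeneousQuotient, ← hv]; ring
    _ ≤ ∑ i ∈ range m, b ^ (i + 1) * (|v i| + b / 2 * |v m|) + 2 * |v m| := by
        gcongr with i hi
        exact entry_le i (mem_range.mp hi)
    _ = b * ∑ i ∈ range m, b ^ i * |v i| +
          (2 + b / 2 * ∑ i ∈ range m, b ^ (i + 1)) * |v m| := by
        simp only [mul_add, sum_add_distrib, add_mul, mul_sum, sum_mul]
        rw [add_comm (2 * |v m|), ← add_assoc]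
        congr 2 <;> exact sum_congr rfl fun i _ => by ring
    _ ≤ b * ∑ i ∈ range m, b ^ i * |v i| + b ^ (m + 1) * |v m| := by
        gcongr
        exact two_add_half_mul_sum_pow_le hb m
    _ = b * weightedHeight b m v := by rw [weightedHeight, sum_range_succ]; ring

end HeightDescent

theorem cast_homogeneousQuotient_succ_succ {K : Type*} [DivisionRing K] [CharZero K] {m : ℕ}
    {a : ℕ → ℕ → ℚ} {x : ℕ → ℚ} {n i : ℕ} {β : K}
    (h : ((homogeneousQuotient m a x n i : ℚ) : K) = β * (homogeneousQuotient m a x n m : ℚ)) :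
    ((homogeneousQuotient m a x (n + 1) (i + 1) : ℚ) : K) =
      (β - a n (i + 1)) * (homogeneousQuotient m a x n m : ℚ) := by
  rw [homogeneousQuotient, Rat.cast_sub, Rat.cast_mul, h, sub_mul]

namespace JPRun

variable {p m : ℕ} [Fact p.Prime] {α : ℕ → ℕ → ℚ_[p]} {a : ℕ → ℕ → ℚ} {x : ℕ → ℚ}

theorem isSValue (hrun : JPRun p m α a) (n : ℕ) {i : ℕ} (hi : i < m) :
    IsSValue p (α n (i + 1)) (a n (i + 1)) :=
  (hrun n).1 (i + 1) (mem_Icc.mpr ⟨by omega, hi⟩)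

theorem cast_homogeneousQuotient (hrun : JPRun p m α a)
    (hx : ∀ i < m, (x i : ℚ_[p]) = α 0 (i + 1) * x m) (n : ℕ) :
    ∀ i < m, ((homogeneousQuotient m a x n i : ℚ) : ℚ_[p]) =
      α n (i + 1) * (homogeneousQuotient m a x n m : ℚ) := by
  induction n with
  | zero => exact hx
  | succ n ih =>
    intro i hi
    obtain ⟨k, rfl⟩ : ∃ k, m = k + 1 := ⟨m - 1, by omega⟩
    obtain ⟨-, hne, hfirst, hrest⟩ := hrun n
    have hne' := sub_ne_zero.mpr hne
    rw [cast_homogeneousQuotient_succ_succ (ih k k.lt_succ_self)]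
    rcases i with _ | i
    · rw [homogeneousQuotient, hfirst, inv_mul_cancel_left₀ hne']
    · rw [cast_homogeneousQuotient_succ_succ (ih i (by omega)),
        hrest (i + 2) (mem_Icc.mpr ⟨by omega, hi⟩), ← mul_assoc, div_mul_cancel₀ _ hne',
        Nat.add_sub_cancel (m := 1)]

theorem cast_homogeneousQuotient_last_eq_prod (hm : 1 ≤ m) (hrun : JPRun p m α a)
    (hx : ∀ i < m, (x i : ℚ_[p]) = α 0 (i + 1) * x m) (n : ℕ) :
    ((homogeneousQuotient m a x n m : ℚ) : ℚ_[p]) = (∏ k ∈ range n, (α k m - a k m)) * x m := by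
  induction n with
  | zero => rw [range_zero, prod_empty, one_mul, homogeneousQuotient]
  | succ n ih =>
    obtain ⟨l, rfl⟩ := Nat.exists_eq_add_of_le' hm
    rw [cast_homogeneousQuotient_succ_succ (hrun.cast_homogeneousQuotient hx n l l.lt_succ_self),
      ih, prod_range_succ_comm, mul_assoc]

theorem homogeneousQuotient_last_ne_zero (hm : 1 ≤ m) (hrun : JPRun p m α a)
    (hx : ∀ i < m, (x i : ℚ_[p]) = α 0 (i + 1) * x m) (hxm : x m ≠ 0) (n : ℕ) :
    homogeneousQuotient m a x n m ≠ 0 := by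
  rw [← Rat.cast_ne_zero (α := ℚ_[p]), hrun.cast_homogeneousQuotient_last_eq_prod hm hx]
  exact mul_ne_zero (prod_ne_zero_iff.mpr fun k _ => sub_ne_zero.mpr (hrun k).2.1)
    (Rat.cast_ne_zero.mpr hxm)

theorem norm_sub_last_le (hm : 1 ≤ m) (hrun : JPRun p m α a) (n : ℕ) :
    ‖α n m - a n m‖ ≤ (p : ℝ)⁻¹ := by
  rw [← zpow_neg_one, Padic.norm_le_pow_iff_norm_lt_pow_add_one, neg_add_cancel, zpow_zero]
  exact ((hrun n).1 m (mem_Icc.mpr ⟨hm, le_rfl⟩)).2.2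

theorem norm_homogeneousQuotient_last_le (hm : 1 ≤ m) (hrun : JPRun p m α a)
    (hx : ∀ i < m, (x i : ℚ_[p]) = α 0 (i + 1) * x m) (hxm : ‖(x m : ℚ_[p])‖ ≤ 1) (n : ℕ) :
    ‖((homogeneousQuotient m a x n m : ℚ) : ℚ_[p])‖ ≤ (p : ℝ)⁻¹ ^ n := by
  calc ‖((homogeneousQuotient m a x n m : ℚ) : ℚ_[p])‖
      = (∏ k ∈ range n, ‖α k m - a k m‖) * ‖(x m : ℚ_[p])‖ := by
        rw [hrun.cast_homogeneousQuotient_last_eq_prod hm hx, norm_mul, norm_prod]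
    _ ≤ (∏ _k ∈ range n, (p : ℝ)⁻¹) * 1 := by
        gcongr with k
        exact hrun.norm_sub_last_le hm k
    _ = (p : ℝ)⁻¹ ^ n := by rw [prod_const, card_range, mul_one]

theorem pow_le_abs_homogeneousQuotient_last (hm : 1 ≤ m) (hrun : JPRun p m α a) {z : ℕ → ℤ}
    (hx : ∀ i < m, (z i : ℚ_[p]) = α 0 (i + 1) * z m) (hxm : z m ≠ 0) (n : ℕ) :
    (p : ℚ) ^ n ≤ |homogeneousQuotient m a (fun i => (z i : ℚ)) n m| := by
  have hx' : ∀ i < m, ((z i : ℚ) : ℚ_[p]) = α 0 (i + 1) * (z m : ℚ) := by exact_mod_cast hx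
  have inZInvP_last : InZInvP p (homogeneousQuotient m a (fun i => (z i : ℚ)) n m) :=
    inZInvP_homogeneousQuotient (NeZero.ne p) (fun n _ hi => (hrun.isSValue n hi).1)
      (fun i _ => InZInvP.intCast (z i)) n m le_rfl
  refine inZInvP_last.pow_le_abs_of_norm_le ?_ ?_
  · exact hrun.homogeneousQuotient_last_ne_zero hm hx' (Int.cast_ne_zero.mpr hxm) n
  · refine hrun.norm_homogeneousQuotient_last_le hm hx' ?_ n
    exact_mod_cast Padic.norm_int_le_one (z m)

end JPRun

theorem jacobiPerron_rational_input_terminates_general (p m : ℕ) [hp : Fact p.Prime] (hm : 1 ≤ m)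
    (α : ℕ → ℕ → ℚ_[p]) (a : ℕ → ℕ → ℚ) (hrun : JPRun p m α a) :
    ∃ i ∈ Finset.Icc 1 m, α 0 i ∉ Set.range ((↑) : ℚ → ℚ_[p]) := by
  by_contra! hrat
  obtain ⟨x, hxm, hx⟩ := exists_int_projective_representative_of_mem_range_ratCast
    (β := fun i => α 0 (i + 1)) fun i hi => hrat (i + 1) (mem_Icc.mpr ⟨by omega, hi⟩)
  set v := homogeneousQuotient m a (fun i => (x i : ℚ))
  have hp0 : (0 : ℚ) < p := by exact_mod_cast hp.out.pos
  have hp2 : (2 : ℚ) ≤ p := by exact_mod_cast hp.out.two_le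
  have last_ge : ∀ n, (p : ℚ) ^ n ≤ |v n m| :=
    hrun.pow_le_abs_homogeneousQuotient_last hm hx hxm
  have height_succ : ∀ n, weightedHeight (p : ℚ) m (v (n + 1)) + |v n m| ≤
      p * weightedHeight (p : ℚ) m (v n) := fun n =>
    weightedHeight_homogeneousQuotient_succ_add_le hp2 _ fun i hi => (hrun.isSValue n hi).2.1.le
  refine not_forall_succ_add_pow_le_mul hp0 (fun n => weightedHeight_nonneg hp0.le m (v n)) ?_
  exact fun n => (add_le_add_right (last_ge n) _).trans (height_succ n)

/-- There is no infinite run of the `p`-adic Jacobi–Perron algorithm whose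
input is rational: for an infinite run, at least one of `α₀⁽¹⁾, …, α₀⁽ᵐ⁾` is not in the image
of `ℚ` in `ℚ_p`. -/
theorem jacobiPerron_rational_input_terminates (p m : ℕ) [hp : Fact p.Prime]
    (hp2 : 2 < p) (hm : 1 ≤ m)
    (α : ℕ → ℕ → ℚ_[p]) (a : ℕ → ℕ → ℚ)
    (hrun : JPRun p m α a) :
    ∃ i ∈ Finset.Icc 1 m, α 0 i ∉ Set.range ((↑) : ℚ → ℚ_[p]) :=
  jacobiPerron_rational_input_terminates_general p m hm α a hrun
end

section
/- Assume that the partial quotients satisfy |a_n^{(i)}|_∞ < p/2 for all n ≥ 0 and i = 1,…,m. Then for every i = 1,…,m and every n ≥ 0, the convergent numerator satisfies |A_n^{(i)}|_∞ < p^{n+1}/2. -/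
open Finset Filter

/-!
Each convergent numerator or denominator solves a linear recurrence whose coefficients are smaller
than `c = p / 2` in absolute value; this includes the last coefficient `1`, because `p > 2`. Let
`T n` be the sum of the absolute values of all the terms before index `n`, initial values included.
Then `|A n| < c * M` for every positive `M ≥ T n`, so `T` grows at most by the factor `1 + c` per
step. The initial values are a standard basis vector, so `T 0 = 1` and `|A n| < c * (1 + c) ^ n`.
Finally `1 + c ≤ p`.
-/

theorem sum_Ico_sub_natCast {M : Type*} [AddCommMonoid M] (f : ℤ → M) (n : ℤ) (d : ℕ) :
    ∑ k ∈ Ico (n - d) n, f k = ∑ j ∈ Icc 1 d, f (n - j) := by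
  refine sum_bij' (fun k _ ↦ (n - k).toNat) (fun j _ ↦ n - j) ?_ ?_ ?_ ?_ ?_
  · intro k hk
    simp only [mem_Ico, mem_Icc] at *
    omega
  · intro j hj
    simp only [mem_Ico, mem_Icc] at *
    omega
  · intro k hk
    simp only [mem_Ico] at hk
    omega
  · intro j _
    omega
  · intro k hk
    rw [Int.toNat_of_nonneg (sub_nonneg.2 (mem_Ico.1 hk).2.le), sub_sub_cancel]

theorem half_mul_one_add_half_pow_le {K : Type*} [Field K] [LinearOrder K] [IsStrictOrderedRing K]
    {b : K} (hb : 2 ≤ b) (n : ℕ) : b / 2 * (1 + b / 2) ^ n ≤ b ^ (n + 1) / 2 :=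
  calc b / 2 * (1 + b / 2) ^ n ≤ b / 2 * b ^ n := by gcongr; linarith
    _ = b ^ (n + 1) / 2 := by ring

section LinearRecurrence

variable {R : Type*} [Ring R] [LinearOrder R] [IsStrictOrderedRing R]

theorem abs_sum_mul_lt_mul {ι : Type*} {s : Finset ι} {f g : ι → R} {c M : R} (hc : 0 < c)
    (hM : 0 < M) (hf : ∀ j ∈ s, |f j| < c) (hg : ∑ j ∈ s, |g j| ≤ M) :
    |∑ j ∈ s, f j * g j| < c * M := by
  by_cases hzero : ∀ j ∈ s, g j = 0
  · rw [sum_eq_zero fun j hj ↦ by rw [hzero j hj, mul_zero], abs_zero]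
    exact mul_pos hc hM
  · push Not at hzero
    obtain ⟨j₀, hj₀, hgj₀⟩ := hzero
    calc |∑ j ∈ s, f j * g j| ≤ ∑ j ∈ s, |f j| * |g j| := by
          simpa only [abs_mul] using abs_sum_le_sum_abs (fun j ↦ f j * g j) s
      _ < ∑ j ∈ s, c * |g j| :=
          sum_lt_sum (fun j hj ↦ mul_le_mul_of_nonneg_right (hf j hj).le (abs_nonneg _))
            ⟨j₀, hj₀, mul_lt_mul_of_pos_right (hf j₀ hj₀) (abs_pos.2 hgj₀)⟩
      _ = c * ∑ j ∈ s, |g j| := (mul_sum ..).symm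
      _ ≤ c * M := mul_le_mul_of_nonneg_left hg hc.le

variable {d : ℕ} {u : ℤ → R} {q : ℕ → ℕ → R} {c M : R}

theorem abs_lt_mul_of_linear_recurrence_of_sum_le {n : ℕ}
    (hu : u n = ∑ j ∈ Icc 1 d, q n j * u (n - j)) (hc : 0 < c) (hM : 0 < M)
    (hq : ∀ j ∈ Icc 1 d, |q n j| < c) (hsum : ∑ k ∈ Ico (-d : ℤ) n, |u k| ≤ M) :
    |u n| < c * M := by
  rw [hu]
  refine abs_sum_mul_lt_mul hc hM hq ?_
  rw [← sum_Ico_sub_natCast (fun k ↦ |u k|)]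
  refine le_trans (sum_le_sum_of_subset_of_nonneg ?_ fun _ _ _ ↦ abs_nonneg _) hsum
  exact Ico_subset_Ico_left (by omega)

theorem sum_abs_le_of_linear_recurrence
    (hu : ∀ n : ℕ, u n = ∑ j ∈ Icc 1 d, q n j * u (n - j)) (hc : 0 < c) (hM : 0 < M)
    (hq : ∀ n, ∀ j ∈ Icc 1 d, |q n j| < c) (hinit : ∑ j ∈ Icc 1 d, |u (-j)| ≤ M) (n : ℕ) :
    ∑ k ∈ Ico (-d : ℤ) n, |u k| ≤ (1 + c) ^ n * M := by
  induction n with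
  | zero => simpa using (sum_Ico_sub_natCast (fun k ↦ |u k|) 0 d).trans_le (by simpa using hinit)
  | succ n ih =>
    have hun : |u n| < c * ((1 + c) ^ n * M) :=
      abs_lt_mul_of_linear_recurrence_of_sum_le (hu n) hc (by positivity) (hq n) ih
    calc ∑ k ∈ Ico (-d : ℤ) (n + 1 : ℕ), |u k|
        = |u n| + ∑ k ∈ Ico (-d : ℤ) n, |u k| := by
          rw [Nat.cast_succ, ← insert_Ico_right_eq_Ico_add_one (by omega), sum_insert (by simp)]
      _ ≤ c * ((1 + c) ^ n * M) + (1 + c) ^ n * M := add_le_add hun.le ih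
      _ = (1 + c) ^ (n + 1) * M := by rw [pow_succ']; noncomm_ring

theorem abs_lt_of_linear_recurrence
    (hu : ∀ n : ℕ, u n = ∑ j ∈ Icc 1 d, q n j * u (n - j)) (hc : 0 < c) (hM : 0 < M)
    (hq : ∀ n, ∀ j ∈ Icc 1 d, |q n j| < c) (hinit : ∑ j ∈ Icc 1 d, |u (-j)| ≤ M) (n : ℕ) :
    |u n| < c * ((1 + c) ^ n * M) :=
  abs_lt_mul_of_linear_recurrence_of_sum_le (hu n) hc (by positivity) (hq n)
    (sum_abs_le_of_linear_recurrence hu hc hM hq hinit n)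

end LinearRecurrence

/-- The partial quotients `a n 1, …, a n m` completed by the convention `aₙ⁽ᵐ⁺¹⁾ = 1`, which makes
the recurrence of the convergents homogeneous of order `m + 1`. -/
def extendedPartialQuotient (m : ℕ) (a : ℕ → ℕ → ℚ) (n : ℕ) : ℕ → ℚ :=
  Function.update (a n) (m + 1) 1

theorem abs_extendedPartialQuotient_lt {m : ℕ} {a : ℕ → ℕ → ℚ} {n : ℕ} {c : ℚ} (hc : 1 < c)
    (ha : ∀ j ∈ Icc 1 m, |a n j| < c) :
    ∀ j ∈ Icc 1 (m + 1), |extendedPartialQuotient m a n j| < c := by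
  intro j hj
  rw [extendedPartialQuotient, Function.update_apply]
  split_ifs with hjm
  · rwa [abs_one]
  · exact ha j (by simp only [mem_Icc] at *; omega)

namespace JPConv

variable {m : ℕ} {a : ℕ → ℕ → ℚ} {A : ℤ → ℕ → ℚ} {i : ℕ}

theorem eq_sum_extendedPartialQuotient (h : JPConv m a A) (hi : i ∈ Icc 1 (m + 1)) (n : ℕ) :
    A n i = ∑ j ∈ Icc 1 (m + 1), extendedPartialQuotient m a n j * A (n - j) i := by
  rw [h.2 n i hi, sum_Icc_succ_top (by omega)]
  congr 1
  · refine sum_congr rfl fun j hj ↦ ?_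
    have hjm : j ≠ m + 1 := by simp only [mem_Icc] at hj; omega
    rw [extendedPartialQuotient, Function.update_of_ne hjm]
  · rw [extendedPartialQuotient, Function.update_self, one_mul, Nat.cast_succ, sub_sub]

theorem sum_abs_initial (h : JPConv m a A) (hi : i ∈ Icc 1 (m + 1)) :
    ∑ j ∈ Icc 1 (m + 1), |A (-j) i| = 1 :=
  calc ∑ j ∈ Icc 1 (m + 1), |A (-j) i| = ∑ j ∈ Icc 1 (m + 1), if i = j then 1 else 0 :=
        sum_congr rfl fun j hj ↦ by rw [h.1 i hi j hj]; split_ifs <;> simp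
    _ = 1 := by rw [sum_ite_eq, if_pos hi]

end JPConv

theorem jacobiPerron_convergent_archimedean_bound_general {m : ℕ} {a : ℕ → ℕ → ℚ}
    {A : ℤ → ℕ → ℚ} {c : ℚ} (hc : 1 < c) (hconv : JPConv m a A)
    (ha : ∀ n, ∀ i ∈ Icc 1 m, |a n i| < c) :
    ∀ i ∈ Icc 1 (m + 1), ∀ n : ℕ, |A n i| < c * (1 + c) ^ n := by
  intro i hi n
  simpa only [mul_one] using
    abs_lt_of_linear_recurrence (u := (A · i)) (hconv.eq_sum_extendedPartialQuotient hi)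
      (zero_lt_one.trans hc) one_pos (fun n ↦ abs_extendedPartialQuotient_lt hc (ha n))
      (hconv.sum_abs_initial hi).le n

/-- If the partial quotients (elements of `ℤ[1/p]`) satisfy
`|aₙ⁽ⁱ⁾|_∞ < p/2` for all `n ≥ 0` and `i = 1,…,m`, then `|Aₙ⁽ⁱ⁾|_∞ < p^{n+1}/2` for every
`i = 1,…,m` and every `n ≥ 0`. -/
theorem jacobiPerron_convergent_archimedean_bound (p m : ℕ) (hp : p.Prime)
    (hp2 : 2 < p) (hm : 1 ≤ m)
    (a : ℕ → ℕ → ℚ) (A : ℤ → ℕ → ℚ) (hconv : JPConv m a A)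
    (ha : ∀ n : ℕ, ∀ i ∈ Finset.Icc 1 m, InZInvP p (a n i) ∧ |a n i| < (p : ℚ) / 2) :
    ∀ i ∈ Finset.Icc 1 m, ∀ n : ℕ, |A n i| < (p : ℚ) ^ (n + 1) / 2 := by
  have hc : (1 : ℚ) < p / 2 := by rw [one_lt_div two_pos]; exact_mod_cast hp2
  intro i hi n
  exact (jacobiPerron_convergent_archimedean_bound_general hc hconv (fun k j hj ↦ (ha k j hj).2) i
    (Icc_subset_Icc_right m.le_succ hi) n).trans_le
    (half_mul_one_add_half_pow_le (by exact_mod_cast hp2.le) n)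
end

section
/- Assume that the partial quotients satisfy |a_n^{(1)}|_p > 1 and |a_n^{(i)}|_p < |a_n^{(1)}|_p for i = 2,…,m and all n ≥ 1. Then for every n ≥ 1, the denominator of the n-th convergent satisfies |A_n^{(m+1)}|_p = Π_{h=1}^{n} |a_h^{(1)}|_p. -/
open Finset Filter

/-!
Write `Bₙ = Aₙ⁽ᵐ⁺¹⁾`. If `|Bₖ| ≤ |Bₙ|` for all `-m ≤ k ≤ n`, then in the recurrence for `Bₙ₊₁` the
term `aₙ₊₁⁽¹⁾ Bₙ` is strictly larger than every other one, so the ultrametric inequality gives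
`|Bₙ₊₁| = |aₙ₊₁⁽¹⁾| |Bₙ| > |Bₙ|`. Hence maximality passes from `Bₙ` to `Bₙ₊₁`; the induction starts
at `B₀ = 1`, which is preceded by `m` zeros.
-/

/-- The sequence of denominators `Bₙ = Aₙ⁽ᵐ⁺¹⁾` of an `m`-dimensional Jacobi–Perron continued
fraction with partial quotients `a n i = aₙ⁽ⁱ⁾` in an arbitrary ring. It is indexed by `ℤ` so that
it includes the initial values at `-1, …, -(m + 1)`; values at smaller indices are arbitrary. -/
structure IsJacobiPerronDenominator {R : Type*} [Ring R] (m : ℕ) (a : ℕ → ℕ → R) (B : ℤ → R) :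
    Prop where
  apply_neg : ∀ j ∈ Icc 1 m, B (-(j : ℤ)) = 0
  apply_neg_last : B (-(m : ℤ) - 1) = 1
  recurrence (n : ℕ) : B n = (∑ j ∈ Icc 1 m, a n j * B ((n : ℤ) - j)) + B ((n : ℤ) - m - 1)

theorem JPConv.isJacobiPerronDenominator {m : ℕ} {a : ℕ → ℕ → ℚ} {A : ℤ → ℕ → ℚ}
    (h : JPConv m a A) : IsJacobiPerronDenominator m a (A · (m + 1)) := by
  obtain ⟨h_init, h_rec⟩ := h
  have h_top : m + 1 ∈ Icc 1 (m + 1) := by simp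
  refine ⟨fun j hj ↦ ?_, ?_, fun n ↦ h_rec n _ h_top⟩
  · rw [mem_Icc] at hj
    simpa [show m + 1 ≠ j by omega] using h_init _ h_top j (mem_Icc.2 ⟨hj.1, by omega⟩)
  · have h_last := h_init _ h_top _ h_top
    rwa [if_pos rfl, Nat.cast_succ, neg_add'] at h_last

section Nonarchimedean

variable {R S : Type*} [Ring R] [CommRing S] [LinearOrder S] [IsStrictOrderedRing S]
  {v : AbsoluteValue R S}

theorem abv_sum_mul_eq_of_dominant (hv : IsNonarchimedean v) {ι : Type*} {s : Finset ι}
    {c u : ι → R} {k : ι} (hk : k ∈ s) (hc : ∀ j ∈ s, j ≠ k → v (c j) < v (c k))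
    (hu : ∀ j ∈ s, v (u j) ≤ v (u k)) (huk : u k ≠ 0) :
    v (∑ j ∈ s, c j * u j) = v (c k) * v (u k) := by
  rw [hv.apply_sum_eq_of_lt (fun x ↦ (v.map_neg x).symm) hk, v.map_mul]
  intro j hj hjk
  rw [v.map_mul, v.map_mul]
  exact mul_lt_mul_of_lt_of_le_of_nonneg_of_pos (hc j hj hjk) (hu j hj) (v.nonneg _) (v.pos huk)

namespace IsJacobiPerronDenominator

variable {m : ℕ} {a : ℕ → ℕ → R} {B : ℤ → R}

theorem apply_zero (hB : IsJacobiPerronDenominator m a B) : B 0 = 1 := by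
  have h_sum : ∑ j ∈ Icc 1 m, a 0 j * B (-(j : ℤ)) = 0 :=
    sum_eq_zero fun j hj ↦ by rw [hB.apply_neg j hj, mul_zero]
  simpa [h_sum, hB.apply_neg_last] using hB.recurrence 0

variable [Nontrivial R]

theorem abv_succ_of_forall_le (hB : IsJacobiPerronDenominator m a B) (hv : IsNonarchimedean v)
    (hm : 1 ≤ m) {n : ℕ} (ha_one : 1 < v (a (n + 1) 1))
    (ha_lt : ∀ i ∈ Icc 2 m, v (a (n + 1) i) < v (a (n + 1) 1))
    (h_max : ∀ k : ℤ, -m ≤ k → k ≤ n → v (B k) ≤ v (B n)) :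
    v (B (n + 1 : ℕ)) = v (a (n + 1) 1) * v (B n) := by
  have h_one_le : 1 ≤ v (B n) := by
    simpa [hB.apply_zero] using h_max 0 (by omega) (by omega)
  have h_pos : 0 < v (B n) := one_pos.trans_le h_one_le
  have h_prev : ((n + 1 : ℕ) : ℤ) - (1 : ℕ) = n := by simp
  have h_sum : v (∑ j ∈ Icc 1 m, a (n + 1) j * B ((n + 1 : ℕ) - j)) =
      v (a (n + 1) 1) * v (B n) := by
    rw [abv_sum_mul_eq_of_dominant hv (mem_Icc.2 ⟨le_rfl, hm⟩), h_prev]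
    · intro j hj hj_ne
      exact ha_lt j (by grind)
    · intro j hj
      rw [mem_Icc] at hj
      rw [h_prev]
      exact h_max _ (by omega) (by omega)
    · rw [h_prev]
      exact v.pos_iff.1 h_pos
  have h_last : v (B ((n + 1 : ℕ) - m - 1)) < v (a (n + 1) 1) * v (B n) :=
    (h_max _ (by omega) (by omega)).trans_lt (lt_mul_of_one_lt_left h_pos ha_one)
  rw [hB.recurrence, hv.add_eq_left_of_lt (h_last.trans_eq h_sum.symm), h_sum]

theorem abv_le_abv (hB : IsJacobiPerronDenominator m a B) (hv : IsNonarchimedean v) (hm : 1 ≤ m)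
    (ha_one : ∀ n, 1 ≤ n → 1 < v (a n 1))
    (ha_lt : ∀ n, 1 ≤ n → ∀ i ∈ Icc 2 m, v (a n i) < v (a n 1)) (n : ℕ) :
    ∀ k : ℤ, -m ≤ k → k ≤ n → v (B k) ≤ v (B n) := by
  induction n with
  | zero =>
    intro k hmk hk
    obtain rfl | hk_neg := hk.eq_or_lt
    · rfl
    · obtain ⟨j, rfl⟩ : ∃ j : ℕ, k = -j := ⟨k.natAbs, by omega⟩
      rw [hB.apply_neg j (mem_Icc.2 ⟨by omega, by omega⟩), v.map_zero]
      exact v.nonneg _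
  | succ n ih =>
    intro k hmk hk
    obtain rfl | hk_lt := hk.eq_or_lt
    · rfl
    have h_one := ha_one (n + 1) n.succ_pos
    calc
      v (B k) ≤ v (B n) := ih k hmk (by omega)
      _ ≤ v (a (n + 1) 1) * v (B n) := le_mul_of_one_le_left (v.nonneg _) h_one.le
      _ = v (B (n + 1 : ℕ)) :=
        (hB.abv_succ_of_forall_le hv hm h_one (ha_lt _ n.succ_pos) ih).symm

theorem abv_succ (hB : IsJacobiPerronDenominator m a B) (hv : IsNonarchimedean v) (hm : 1 ≤ m)
    (ha_one : ∀ n, 1 ≤ n → 1 < v (a n 1))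
    (ha_lt : ∀ n, 1 ≤ n → ∀ i ∈ Icc 2 m, v (a n i) < v (a n 1)) (n : ℕ) :
    v (B (n + 1 : ℕ)) = v (a (n + 1) 1) * v (B n) :=
  hB.abv_succ_of_forall_le hv hm (ha_one _ n.succ_pos) (ha_lt _ n.succ_pos)
    (hB.abv_le_abv hv hm ha_one ha_lt n)

end IsJacobiPerronDenominator

theorem jacobiPerron_denominator_padic_norm_general [Nontrivial R] (hv : IsNonarchimedean v)
    {m : ℕ} (hm : 1 ≤ m) {a : ℕ → ℕ → R} {B : ℤ → R} (hB : IsJacobiPerronDenominator m a B)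
    (ha_one : ∀ n, 1 ≤ n → 1 < v (a n 1))
    (ha_lt : ∀ n, 1 ≤ n → ∀ i ∈ Icc 2 m, v (a n i) < v (a n 1)) (n : ℕ) :
    v (B n) = ∏ h ∈ Icc 1 n, v (a h 1) := by
  induction n with
  | zero => simp [hB.apply_zero]
  | succ n ih =>
    rw [hB.abv_succ hv hm ha_one ha_lt, ih, prod_Icc_succ_top (by omega), mul_comm]

end Nonarchimedean

/-- If the partial quotients satisfy `|aₙ⁽¹⁾|_p > 1` and
`|aₙ⁽ⁱ⁾|_p < |aₙ⁽¹⁾|_p` for `i = 2,…,m` and all `n ≥ 1`, then for every `n ≥ 1` one has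
`|Aₙ⁽ᵐ⁺¹⁾|_p = Π_{h=1}^{n} |a_h⁽¹⁾|_p`. -/
theorem jacobiPerron_denominator_padic_norm (p m : ℕ) (hp : p.Prime)
    (hp2 : 2 < p) (hm : 1 ≤ m)
    (a : ℕ → ℕ → ℚ) (A : ℤ → ℕ → ℚ) (hconv : JPConv m a A)
    (ha1 : ∀ n : ℕ, 1 ≤ n → 1 < padicNorm p (a n 1))
    (ha2 : ∀ n : ℕ, 1 ≤ n → ∀ i ∈ Finset.Icc 2 m, padicNorm p (a n i) < padicNorm p (a n 1)) :
    ∀ n : ℕ, 1 ≤ n →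
      padicNorm p (A n (m + 1)) = ∏ h ∈ Finset.Icc 1 n, padicNorm p (a h 1) := by
  have : Fact p.Prime := ⟨hp⟩
  exact fun n _ ↦ jacobiPerron_denominator_padic_norm_general
    (v := IsAbsoluteValue.toAbsoluteValue (padicNorm p)) (fun _ _ ↦ padicNorm.nonarchimedean) hm
    hconv.isJacobiPerronDenominator ha1 ha2 n
end

section
/- For an infinite run of the p-adic Jacobi–Perron algorithm, define V_n^{(i)} = A_n^{(i)} − α_0^{(i)} A_n^{(m+1)} ∈ ℚ_p for n ≥ −m and i = 1,…,m. Then for each i = 1,…,m, lim_{n→+∞} |V_n^{(i)}|_p = 0. -/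
open Finset Filter

/-!
The recurrence satisfied by the convergents is linear, so `V = A⁽ⁱ⁾ - α₀⁽ⁱ⁾ A⁽ᵐ⁺¹⁾` satisfies it
too. For a solution `W` of the recurrence, put
`Lₙ = αₙ⁽¹⁾ Wₙ₋₁ + ⋯ + αₙ⁽ᵐ⁾ Wₙ₋ₘ + Wₙ₋ₘ₋₁`. The algorithm is designed so that
`(αₙ⁽ᵐ⁾ - aₙ⁽ᵐ⁾) Lₙ₊₁ = Lₙ`; as `L₀ = 0` for `W = V`, every `Lₙ` vanishes. Subtracting `Lₙ = 0` from
the recurrence leaves `Vₙ = ∑ⱼ (aₙ⁽ʲ⁾ - αₙ⁽ʲ⁾) Vₙ₋ⱼ`, whose coefficients have absolute value at most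
`r < 1` (`r = 1/p` for the `p`-adic algorithm). By the ultrametric inequality, each block of `m`
consecutive indices then gains a factor `r`.
-/

open scoped NNReal Topology

namespace JacobiPerron

section LinearForm

variable {R : Type*} [CommRing R]

/-- The linear form `W ↦ x₁ Wₙ₋₁ + ⋯ + xₘ Wₙ₋ₘ + Wₙ₋ₘ₋₁` on two-sided sequences: the right-hand side
of the recurrence of the convergents when `x` is a row of partial quotients. -/
def linearForm (m : ℕ) (x : ℕ → R) (n : ℤ) : (ℤ → R) →ₗ[R] R :=
  ∑ j ∈ Icc 1 m, x j • LinearMap.proj (n - j) + LinearMap.proj (n - m - 1)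

theorem linearForm_apply (m : ℕ) (x : ℕ → R) (n : ℤ) (W : ℤ → R) :
    linearForm m x n W = ∑ j ∈ Icc 1 m, x j * W (n - j) + W (n - m - 1) := by
  simp [linearForm]

theorem linearForm_sub_linearForm (m : ℕ) (x y : ℕ → R) (n : ℤ) (W : ℤ → R) :
    linearForm m x n W - linearForm m y n W = ∑ j ∈ Icc 1 m, (x j - y j) * W (n - j) := by
  simp only [linearForm_apply, sub_mul, sum_sub_distrib]
  ring

/-- The module of two-sided sequences satisfying, at every index `n ≥ 0`, the recurrence
`Wₙ = aₙ⁽¹⁾ Wₙ₋₁ + ⋯ + aₙ⁽ᵐ⁾ Wₙ₋ₘ + Wₙ₋ₘ₋₁` of the convergents. -/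
def solutions (m : ℕ) (a : ℕ → ℕ → R) : Submodule R (ℤ → R) :=
  ⨅ n : ℕ, LinearMap.eqLocus (LinearMap.proj (n : ℤ)) (linearForm m (a n) n)

theorem mem_solutions {m : ℕ} {a : ℕ → ℕ → R} {W : ℤ → R} :
    W ∈ solutions m a ↔ ∀ n : ℕ, W n = linearForm m (a n) n W := by
  simp [solutions]

end LinearForm

section Expansion

variable {K : Type*} [Field K] {m : ℕ} {α a : ℕ → ℕ → K} {W : ℤ → K}

/-- The algebraic part of a run of the Jacobi–Perron algorithm over a field: the rule producing the
complete quotients `α (n + 1)` from `α n` and the partial quotients `a n`, the latter being chosen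
arbitrarily. The superscripts range over `1, …, m`. -/
structure IsExpansion (m : ℕ) (α a : ℕ → ℕ → K) : Prop where
  sub_ne_zero (n : ℕ) : α n m - a n m ≠ 0
  succ_one (n : ℕ) : α (n + 1) 1 = (α n m - a n m)⁻¹
  succ_succ (n : ℕ) : ∀ i ∈ Ico 1 m, α (n + 1) (i + 1) = (α n i - a n i) / (α n m - a n m)

theorem IsExpansion.mul_linearForm_succ (h : IsExpansion m α a) (hm : 1 ≤ m)
    (hW : W ∈ solutions m a) (n : ℕ) :
    (α n m - a n m) * linearForm m (α (n + 1)) (n + 1) W = linearForm m (α n) n W := by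
  have hδ := h.sub_ne_zero n
  have first_term : (α n m - a n m) * (α (n + 1) 1 * W (n + 1 - (1 : ℕ))) = W n := by
    rw [h.succ_one, mul_inv_cancel_left₀ hδ, Nat.cast_one, add_sub_cancel_right]
  have later_term : ∀ j ∈ Ico 1 m,
      (α n m - a n m) * (α (n + 1) (j + 1) * W (n + 1 - (j + 1 : ℕ))) =
        (α n j - a n j) * W (n - j) := fun j hj ↦ by
    rw [h.succ_succ n j hj, ← mul_assoc, mul_div_cancel₀ _ hδ, Nat.cast_succ,
      add_sub_add_right_eq_sub]
  calc (α n m - a n m) * linearForm m (α (n + 1)) (n + 1) W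
    _ = W n + ∑ j ∈ Ico 1 m, (α n j - a n j) * W (n - j) + (α n m - a n m) * W (n - m) := by
      rw [linearForm_apply, mul_add, mul_sum, ← Ico_add_one_right_eq_Icc,
        sum_eq_sum_Ico_succ_bot (by lia), first_term, ← sum_Ico_add', sum_congr rfl later_term,
        show (n : ℤ) + 1 - m - 1 = n - m by ring]
    _ = W n + ∑ j ∈ Icc 1 m, (α n j - a n j) * W (n - j) := by
      rw [← Ico_add_one_right_eq_Icc, sum_Ico_succ_top hm, add_assoc]
    _ = linearForm m (α n) n W := by
      rw [← linearForm_sub_linearForm, ← mem_solutions.1 hW n, add_sub_cancel]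

theorem IsExpansion.linearForm_eq_zero (h : IsExpansion m α a) (hm : 1 ≤ m)
    (hW : W ∈ solutions m a) (h₀ : linearForm m (α 0) 0 W = 0) (n : ℕ) :
    linearForm m (α n) n W = 0 := by
  induction n with
  | zero => exact h₀
  | succ n ih =>
    rw [← h.mul_linearForm_succ hm hW n] at ih
    exact_mod_cast (mul_eq_zero.1 ih).resolve_left (h.sub_ne_zero n)

theorem IsExpansion.apply_eq_sum (h : IsExpansion m α a) (hm : 1 ≤ m)
    (hW : W ∈ solutions m a) (h₀ : linearForm m (α 0) 0 W = 0) (n : ℕ) :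
    W n = ∑ j ∈ Icc 1 m, (a n j - α n j) * W (n - j) := by
  rw [← linearForm_sub_linearForm, h.linearForm_eq_zero hm hW h₀, sub_zero, mem_solutions.1 hW n]

end Expansion

section Convergents

variable {R : Type*} [CommRing R] {m : ℕ} {a : ℕ → ℕ → R} {A : ℤ → ℕ → R} {i : ℕ}

/-- `A n i` is the `n`-th convergent numerator (for `i = m + 1`: denominator) attached to the
partial quotients `a`, with entries in an arbitrary commutative ring. -/
structure IsConvergents (m : ℕ) (a : ℕ → ℕ → R) (A : ℤ → ℕ → R) : Prop where
  apply_neg : ∀ i ∈ Icc 1 (m + 1), ∀ j ∈ Icc 1 (m + 1), A (-(j : ℤ)) i = if i = j then 1 else 0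
  mem_solutions : ∀ i ∈ Icc 1 (m + 1), (A · i) ∈ solutions m a

/-- The sequence `V⁽ⁱ⁾ = A⁽ⁱ⁾ - x A⁽ᵐ⁺¹⁾` measuring how well the quotients `A⁽ⁱ⁾ / A⁽ᵐ⁺¹⁾`
approximate `x`. -/
def approxError (m : ℕ) (A : ℤ → ℕ → R) (x : R) (i : ℕ) : ℤ → R :=
  (A · i) - x • (A · (m + 1))

theorem approxError_apply (m : ℕ) (A : ℤ → ℕ → R) (x : R) (i : ℕ) (n : ℤ) :
    approxError m A x i n = A n i - x * A n (m + 1) :=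
  rfl

theorem IsConvergents.approxError_mem_solutions (hA : IsConvergents m a A) (x : R)
    (hi : i ∈ Icc 1 m) : approxError m A x i ∈ solutions m a := by
  rw [mem_Icc] at hi
  exact sub_mem (hA.mem_solutions i (mem_Icc.2 (by lia)))
    (Submodule.smul_mem _ x (hA.mem_solutions (m + 1) (mem_Icc.2 (by lia))))

theorem IsConvergents.approxError_neg (hA : IsConvergents m a A) (x : R)
    (hi : i ∈ Icc 1 m) {j : ℕ} (hj : j ∈ Icc 1 m) :
    approxError m A x i (-j) = if i = j then 1 else 0 := by
  rw [mem_Icc] at hi hj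
  rw [approxError_apply, hA.apply_neg i (mem_Icc.2 (by lia)) j (mem_Icc.2 (by lia)),
    hA.apply_neg (m + 1) (mem_Icc.2 (by lia)) j (mem_Icc.2 (by lia)),
    if_neg (show m + 1 ≠ j by lia), mul_zero, sub_zero]

theorem IsConvergents.approxError_neg_succ (hA : IsConvergents m a A) (x : R)
    (hi : i ∈ Icc 1 m) : approxError m A x i (-(m + 1 : ℕ)) = -x := by
  rw [mem_Icc] at hi
  have hm : m + 1 ∈ Icc 1 (m + 1) := mem_Icc.2 (by lia)
  rw [approxError_apply, hA.apply_neg i (mem_Icc.2 (by lia)) _ hm, hA.apply_neg _ hm _ hm,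
    if_neg (by lia), if_pos rfl, mul_one, zero_sub]

theorem IsConvergents.linearForm_approxError (hA : IsConvergents m a A) (x : ℕ → R)
    (hi : i ∈ Icc 1 m) : linearForm m x 0 (approxError m A (x i) i) = 0 := by
  have sum_eq : ∑ j ∈ Icc 1 m, x j * approxError m A (x i) i (0 - j) = x i := by
    rw [sum_congr rfl fun j hj ↦ by rw [zero_sub, hA.approxError_neg (x i) hi hj, mul_ite, mul_one,
      mul_zero], sum_ite_eq, if_pos hi]
  rw [linearForm_apply, sum_eq, show (0 : ℤ) - m - 1 = -(m + 1 : ℕ) by push_cast; ring,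
    hA.approxError_neg_succ (x i) hi, add_neg_cancel]

end Convergents

section Ultrametric

theorem nnnorm_le_pow_of_eq_sum_mul {R : Type*} [NonUnitalSeminormedRing R] [IsUltrametricDist R]
    {m : ℕ} {c : ℕ → ℕ → R} {W : ℤ → R} {r B : ℝ≥0} (hr : r ≤ 1)
    (hc : ∀ n, ∀ j ∈ Icc 1 m, ‖c n j‖₊ ≤ r)
    (hinit : ∀ j ∈ Icc 1 m, ‖W (-(j : ℤ))‖₊ ≤ B)
    (hW : ∀ n : ℕ, W n = ∑ j ∈ Icc 1 m, c n j * W (n - j)) (n : ℕ) :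
    ‖W n‖₊ ≤ r ^ (n / m + 1) * B := by
  induction n using Nat.strong_induction_on with
  | _ n ih =>
    have previous : ∀ j ∈ Icc 1 m, ‖W (n - j)‖₊ ≤ r ^ (n / m) * B := by
      intro j hj
      obtain ⟨hj₁, hjm⟩ := mem_Icc.1 hj
      rcases le_or_gt j n with hjn | hnj
      · have exponent_le : n / m ≤ (n - j) / m + 1 := by
          rw [← Nat.add_div_right _ (by lia)]
          exact Nat.div_le_div_right (by lia)
        rw [← Nat.cast_sub hjn]
        exact (ih (n - j) (by lia)).trans
          (mul_le_mul_left (pow_le_pow_of_le_one zero_le hr exponent_le) B)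
      · rw [Nat.div_eq_of_lt (by lia), pow_zero, one_mul,
          show (n : ℤ) - j = -((j - n : ℕ) : ℤ) by lia]
        exact hinit (j - n) (mem_Icc.2 (by lia))
    rw [hW n, pow_succ', mul_assoc]
    refine IsUltrametricDist.nnnorm_sum_le_of_forall_le fun j hj ↦ ?_
    exact (nnnorm_mul_le _ _).trans (mul_le_mul' (hc n j hj) (previous j hj))

variable {K : Type*} [NormedField K] [IsUltrametricDist K] {m : ℕ} {α a : ℕ → ℕ → K}
  {A : ℤ → ℕ → K} {r : ℝ≥0}

theorem IsExpansion.nnnorm_approxError_le (h : IsExpansion m α a) (hA : IsConvergents m a A)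
    (hr : r ≤ 1) (hαa : ∀ n, ∀ j ∈ Icc 1 m, ‖α n j - a n j‖₊ ≤ r) {i : ℕ} (hi : i ∈ Icc 1 m)
    (n : ℕ) : ‖approxError m A (α 0 i) i n‖₊ ≤ r ^ (n / m + 1) := by
  have hm : 1 ≤ m := (mem_Icc.1 hi).1.trans (mem_Icc.1 hi).2
  have hinit : ∀ j ∈ Icc 1 m, ‖approxError m A (α 0 i) i (-j)‖₊ ≤ 1 := fun j hj ↦ by
    rw [hA.approxError_neg _ hi hj]
    split_ifs <;> simp
  have hrec := h.apply_eq_sum hm (hA.approxError_mem_solutions (α 0 i) hi)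
    (hA.linearForm_approxError (α 0) hi)
  have hc : ∀ n, ∀ j ∈ Icc 1 m, ‖a n j - α n j‖₊ ≤ r := fun n j hj ↦ by
    rw [← nnnorm_neg, neg_sub]
    exact hαa n j hj
  simpa using nnnorm_le_pow_of_eq_sum_mul hr hc hinit hrec n

end Ultrametric

end JacobiPerron

open JacobiPerron

theorem jacobiPerron_V_tendsto_zero_general {K : Type*} [NormedField K] [IsUltrametricDist K]
    {m : ℕ} {α a : ℕ → ℕ → K} {A : ℤ → ℕ → K} (h : IsExpansion m α a) (hA : IsConvergents m a A)
    {r : ℝ≥0} (hr : r < 1) (hαa : ∀ n, ∀ i ∈ Icc 1 m, ‖α n i - a n i‖₊ ≤ r)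
    {i : ℕ} (hi : i ∈ Icc 1 m) :
    Tendsto (fun n : ℕ ↦ A n i - α 0 i * A n (m + 1)) atTop (𝓝 0) := by
  have hm : m ≠ 0 := by have := mem_Icc.1 hi; lia
  have rate_tendsto : Tendsto (fun n : ℕ ↦ (r : ℝ) ^ (n / m + 1)) atTop (𝓝 0) :=
    (tendsto_pow_atTop_nhds_zero_of_lt_one r.coe_nonneg hr).comp
      ((tendsto_add_atTop_nat 1).comp (Nat.tendsto_div_const_atTop hm))
  exact squeeze_zero_norm (fun n ↦ h.nnnorm_approxError_le hA hr.le hαa hi n) rate_tendsto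

section Padic

variable {p m : ℕ} [Fact p.Prime]

theorem IsSValue.nnnorm_sub_le {x : ℚ_[p]} {a : ℚ} (h : IsSValue p x a) :
    ‖x - (a : ℚ_[p])‖₊ ≤ (p : ℝ≥0)⁻¹ := by
  have norm_le :=
    (Padic.norm_le_pow_iff_norm_lt_pow_add_one (x - (a : ℚ_[p])) (-1)).2 (by simpa using h.2.2)
  simpa [← NNReal.coe_le_coe] using norm_le

theorem JPRun.isExpansion {α : ℕ → ℕ → ℚ_[p]} {a : ℕ → ℕ → ℚ} (h : JPRun p m α a) :
    IsExpansion m α (fun n i ↦ (a n i : ℚ_[p])) where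
  sub_ne_zero n := sub_ne_zero.2 (h n).2.1
  succ_one n := (h n).2.2.1
  succ_succ n i hi := (h n).2.2.2 (i + 1) (by rw [mem_Ico] at hi; exact mem_Icc.2 (by lia))

theorem JPConv.isConvergents {K : Type*} [Field K] [CharZero K] {a : ℕ → ℕ → ℚ} {A : ℤ → ℕ → ℚ}
    (h : JPConv m a A) :
    IsConvergents m (fun n i ↦ (a n i : K)) (fun n i ↦ (A n i : K)) where
  apply_neg i hi j hj := by rw [h.1 i hi j hj]; split_ifs <;> simp
  mem_solutions i hi := mem_solutions.2 fun n ↦ by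
    simp only [linearForm_apply, h.2 n i hi]
    push_cast
    rfl

end Padic

/-- For an infinite run of the `p`-adic Jacobi–Perron algorithm, with
`Vₙ⁽ⁱ⁾ = Aₙ⁽ⁱ⁾ - α₀⁽ⁱ⁾ Aₙ⁽ᵐ⁺¹⁾ ∈ ℚ_p`, one has `lim_{n→∞} |Vₙ⁽ⁱ⁾|_p = 0` for each
`i = 1,…,m`. -/
theorem jacobiPerron_V_tendsto_zero (p m : ℕ) [hp : Fact p.Prime]
    (hp2 : 2 < p) (hm : 1 ≤ m)
    (α : ℕ → ℕ → ℚ_[p]) (a : ℕ → ℕ → ℚ) (A : ℤ → ℕ → ℚ)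
    (hrun : JPRun p m α a) (hconv : JPConv m a A)
    (V : ℤ → ℕ → ℚ_[p])
    (hV : ∀ n : ℤ, -(m : ℤ) ≤ n → ∀ i ∈ Finset.Icc 1 m,
      V n i = ((A n i : ℚ) : ℚ_[p]) - α 0 i * ((A n (m + 1) : ℚ) : ℚ_[p])) :
    ∀ i ∈ Finset.Icc 1 m,
      Filter.Tendsto (fun n : ℕ => ‖V n i‖) Filter.atTop (nhds 0) := by
  intro i hi
  have hp_inv : (p : ℝ≥0)⁻¹ < 1 := inv_lt_one_of_one_lt₀ (mod_cast hp.out.one_lt)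
  have hlim := jacobiPerron_V_tendsto_zero_general hrun.isExpansion hconv.isConvergents hp_inv
    (fun n i hi ↦ ((hrun n).1 i hi).nnnorm_sub_le) hi
  simpa only [fun n : ℕ ↦ hV n (by lia) i hi, norm_zero] using hlim.norm
end
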